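/- arXiv:2307.02844 — 7 statements merged into one kernel-verified Lean document; each statement's English description precedes it below -/
import Mathlib

section
/- Let X be a finite simple graph on a vertex set V that is regular of degree d, and let S be a nonempty proper independent set of X (no two vertices of S are adjacent). Suppose there is a number c such that every vertex of V∖S has exactly c neighbours inside S. Then the real vector v_S − (|S|/|V|)·𝟙, where v_S is the characteristic vector of S and 𝟙 is the all-ones vector, is an eigenvector of the (real) adjacency matrix of X with eigenvalue −d·|S|/(|V|−|S|). -/
/-!
Write `n = |V|` and `s = |S|`. Applying the adjacency matrix to `v_S - (s/n) 𝟙` gives, at `x`,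
the number of neighbours of `x` in `S` minus `d s / n`. That number is `0` on `S` and `c` off `S`,
and counting the edges between `S` and its complement from both sides gives `d s = c (n - s)`
(`degree_mul_card_eq`). The eigenvalue equation is then arithmetic in each of the two cases.
The vector is nonzero because its entries on `S` and off `S` differ by `1`.
-/

/-- Double count of the edges between `S` and its complement; independence of `S` ensures that
all `d` edges at a vertex of `S` leave `S`. -/
lemma degree_mul_card_eq {V : Type*} [Fintype V] [DecidableEq V]
    (X : SimpleGraph V) [DecidableRel X.Adj] (d c : ℕ) (S : Finset V)
    (hreg : X.IsRegularOfDegree d)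
    (hindep : ∀ x ∈ S, ∀ y ∈ S, ¬ X.Adj x y)
    (hc : ∀ x ∉ S, (S.filter fun y => X.Adj x y).card = c) :
    S.card * d = Sᶜ.card * c := by
  refine Finset.card_mul_eq_card_mul X.Adj (fun x hx => ?_) (fun y hy => ?_)
  · rw [← hreg x, ← X.card_neighborFinset_eq_degree]
    congr 1
    ext y
    simp only [Finset.bipartiteAbove, Finset.mem_filter, Finset.mem_compl,
      SimpleGraph.mem_neighborFinset]
    exact ⟨fun h => h.2, fun h => ⟨fun hy => hindep x hx y hy h, h⟩⟩
  · rw [← hc y (Finset.mem_compl.mp hy)]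
    simp only [Finset.bipartiteBelow, X.adj_comm]

/-- The entry at `x` of the adjacency matrix applied to `v_S - a 𝟙`. -/
lemma adjMatrix_mulVec_indicator_sub {V : Type*} [Fintype V] [DecidableEq V]
    (X : SimpleGraph V) [DecidableRel X.Adj] (d : ℕ) (S : Finset V)
    (hreg : X.IsRegularOfDegree d) (a : ℝ) (x : V) :
    Matrix.mulVec (X.adjMatrix ℝ) (fun y : V => (if y ∈ S then (1 : ℝ) else 0) - a) x =
      ((S.filter fun y => X.Adj x y).card : ℝ) - d * a := by
  rw [SimpleGraph.adjMatrix_mulVec_apply, Finset.sum_sub_distrib, Finset.sum_const,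
    X.card_neighborFinset_eq_degree, hreg x, nsmul_eq_mul, Finset.sum_boole]
  congr 3
  ext y
  simp [and_comm]

theorem stmt_1 {V : Type*} [Fintype V] [DecidableEq V]
    (X : SimpleGraph V) [DecidableRel X.Adj] (d c : ℕ)
    (S : Finset V) (hne : S.Nonempty) (hproper : S ≠ Finset.univ)
    (hreg : X.IsRegularOfDegree d)
    (hindep : ∀ x ∈ S, ∀ y ∈ S, ¬ X.Adj x y)
    (hc : ∀ x ∉ S, (S.filter fun y => X.Adj x y).card = c) :
    (fun x : V => (if x ∈ S then (1 : ℝ) else 0) - (S.card : ℝ) / (Fintype.card V : ℝ)) ≠ 0 ∧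
    Matrix.mulVec (X.adjMatrix ℝ)
        (fun x : V => (if x ∈ S then (1 : ℝ) else 0) - (S.card : ℝ) / (Fintype.card V : ℝ)) =
      (-((d : ℝ) * (S.card : ℝ)) / ((Fintype.card V : ℝ) - (S.card : ℝ))) •
        fun x : V => (if x ∈ S then (1 : ℝ) else 0) - (S.card : ℝ) / (Fintype.card V : ℝ) := by
  obtain ⟨u, hu⟩ := hne
  obtain ⟨w, hw⟩ : ∃ w, w ∉ S := by
    by_contra! h
    exact hproper (Finset.eq_univ_iff_forall.mpr h)
  constructor
  · intro h
    have h₁ := congrFun h u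
    have h₂ := congrFun h w
    simp only [hu, hw, if_true, if_false, Pi.zero_apply] at h₁ h₂
    linarith
  · have hlt : (S.card : ℝ) < Fintype.card V := by
      exact_mod_cast Finset.card_lt_univ_of_notMem hw
    have hn : (Fintype.card V : ℝ) ≠ 0 := ((Nat.cast_nonneg S.card).trans_lt hlt).ne'
    have hns : (Fintype.card V : ℝ) - S.card ≠ 0 := (sub_pos.mpr hlt).ne'
    have hcount : (S.card : ℝ) * d = ((Fintype.card V : ℝ) - S.card) * c := by
      rw [← Nat.cast_sub S.card_le_univ, ← Finset.card_compl]
      exact_mod_cast degree_mul_card_eq X d c S hreg hindep hc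
    funext x
    rw [adjMatrix_mulVec_indicator_sub X d S hreg, Pi.smul_apply, smul_eq_mul]
    by_cases hx : x ∈ S
    · have h0 : (S.filter fun y => X.Adj x y) = ∅ :=
        Finset.filter_eq_empty_iff.mpr fun y hy => hindep x hx y hy
      simp only [h0, hx, if_true, Finset.card_empty, Nat.cast_zero]
      field_simp
      ring
    · have hcd : (c : ℝ) = d * S.card / ((Fintype.card V : ℝ) - S.card) := by
        rw [eq_div_iff hns]
        linarith
      simp only [hc x hx, hx, if_false, hcd]
      field_simp
      ring
end

section
/- Let R be a commutative ring, let n be a finite index type, and let A be an n×n matrix over R. Then the characteristic polynomial of the 2n×2n block matrix with all four blocks equal to A (i.e., the Kronecker product of the 2×2 all-ones matrix with A) equals X^{|n|} times the characteristic polynomial of 2A. -/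
theorem stmt_2 {R : Type*} [CommRing R] {n : Type*} [Fintype n] [DecidableEq n]
    (A : Matrix n n R) :
    (Matrix.fromBlocks A A A A).charpoly =
      Polynomial.X ^ (Fintype.card n) * ((2 : R) • A).charpoly := by
  -- The block matrix factors through `n` as `[A; A] * [1 1]`, and the product in the
  -- other order is `A + A`; swapping the factors costs a power of `X`.
  have h₁ : Matrix.fromBlocks A A A A =
      Matrix.fromRows A A * Matrix.fromCols (1 : Matrix n n R) (1 : Matrix n n R) := by
    simp [Matrix.fromRows_mul_fromCols]
  have h₂ : (2 : R) • A =
      Matrix.fromCols (1 : Matrix n n R) (1 : Matrix n n R) * Matrix.fromRows A A := by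
    simp [Matrix.fromCols_mul_fromRows, two_smul]
  rw [h₁, h₂, Matrix.charpoly_mul_comm_of_le _ _ (by simp)]
  simp
end

section
/- Let k ≥ 1 and n ≥ 2k. Consider the quasi-Kneser graph: its vertex set is {0,1} × {A ⊆ {1,…,n} : |A| = k}, and (ε,A) is adjacent to (δ,B) if and only if A ∩ B = ∅. Then the set of eigenvalues of its (real) adjacency matrix equals {0} ∪ {2·(−1)^j·C(n−k−j, k−j) : 0 ≤ j ≤ k}, where C(·,·) denotes the binomial coefficient. -/
/-!
Write `x_T(B) = [T ⊆ B]` for a set `T` of size `j ≤ k`. Counting the `k`-sets `B ⊇ T` disjoint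
from a `k`-set `A` (`card_between`) shows that the Kneser matrix sends `x_T` to
`C(n-k-j, k-j) · [T ∩ A = ∅]`, and the indicator `[T ∩ A = ∅]` is the alternating sum of the
`x_S` with `S ⊆ T`. So the matrix is triangular with respect to `|T|`, with diagonal entries
`(-1)^j C(n-k-j, k-j)`.

Every nonzero eigenvalue is of the stated form: if `Mv = μv` and `μ` is none of the
`2 (-1)^j C(n-k-j, k-j)`, induction on `|T|` gives `⟨v, x_T⟩ = 0` for all `|T| ≤ k`
(`pairing_eq_zero`); for `|T| = k` this says that `v(0,T) + v(1,T) = 0`, whence `Mv = 0`.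

Conversely, `A ↦ ∏_{i<j} ([2i ∈ A] - [2i+1 ∈ A])` (`pairProd`) is an eigenvector: it is a signed
sum of `x_T` over transversals `T` of `j` disjoint pairs, all of size `j`, and replacing `[T ⊆ A]`
by `[T ∩ A = ∅]` changes the sign of each of the `j` factors. The eigenvalue `0` comes from the
vectors that are antisymmetric in the two copies.
-/

/-- The adjacency matrix of the quasi-Kneser graph. -/
def quasiKneser (n k : ℕ) : Matrix (Bool × {s : Finset (Fin n) // s.card = k})
    (Bool × {s : Finset (Fin n) // s.card = k}) ℝ :=
  Matrix.of fun v w =>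
    if (v.2 : Finset (Fin n)) ∩ (w.2 : Finset (Fin n)) = ∅ then (1 : ℝ) else 0

lemma quasiKneser_mulVec (n k : ℕ) (v : Bool × {s : Finset (Fin n) // s.card = k} → ℝ)
    (e : Bool) (A : {s : Finset (Fin n) // s.card = k}) :
    (quasiKneser n k).mulVec v (e, A) =
      ∑ B, (if A.1 ∩ B.1 = ∅ then (1 : ℝ) else 0) * (v (true, B) + v (false, B)) := by
  simp only [quasiKneser, Matrix.mulVec, dotProduct, Matrix.of_apply, Fintype.sum_prod_type,
    Fintype.sum_bool, mul_add, Finset.sum_add_distrib]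

lemma mem_spectrum_quasiKneser (n k : ℕ) (μ : ℝ) :
    μ ∈ spectrum ℝ (quasiKneser n k) ↔
      ∃ v, v ≠ 0 ∧ (quasiKneser n k).mulVec v = μ • v := by
  rw [← Matrix.spectrum_toLin', ← Module.End.hasEigenvalue_iff_mem_spectrum]
  constructor
  · intro h
    obtain ⟨v, hv⟩ := h.exists_hasEigenvector
    exact ⟨v, hv.2, by simpa using hv.apply_eq_smul⟩
  · rintro ⟨v, h0, hv⟩
    exact Module.End.hasEigenvalue_of_hasEigenvector
      (Module.End.hasEigenvector_iff.mpr ⟨Module.End.mem_eigenspace_iff.mpr (by simpa using hv), h0⟩)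

/-- The sets of size `k` between `T` and `U` correspond to subsets of `U \ T` of size
`k - |T|`. -/
lemma card_between {α : Type*} [DecidableEq α] (T U : Finset α) (k : ℕ) (hTU : T ⊆ U)
    (hT : T.card ≤ k) :
    ((U.powersetCard k).filter (T ⊆ ·)).card = (U.card - T.card).choose (k - T.card) := by
  rw [← Finset.card_sdiff_of_subset hTU, ← Finset.card_powersetCard]
  refine Finset.card_bij' (fun B _ => B \ T) (fun C _ => C ∪ T) ?_ ?_ ?_ ?_
  · intro B hB
    simp only [Finset.mem_filter, Finset.mem_powersetCard] at hB ⊢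
    exact ⟨Finset.sdiff_subset_sdiff hB.1.1 subset_rfl, by
      rw [Finset.card_sdiff_of_subset hB.2, hB.1.2]⟩
  · intro C hC
    simp only [Finset.mem_filter, Finset.mem_powersetCard, Finset.subset_sdiff] at hC ⊢
    refine ⟨⟨Finset.union_subset hC.1.1 hTU, ?_⟩, Finset.subset_union_right⟩
    rw [Finset.card_union_of_disjoint hC.1.2]
    omega
  · intro B hB
    simp only [Finset.mem_filter] at hB
    exact Finset.sdiff_union_of_subset hB.2
  · intro C hC
    simp only [Finset.mem_powersetCard, Finset.subset_sdiff] at hC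
    exact Finset.union_sdiff_cancel_right hC.1.2

/-- The Kneser matrix applied to the function `B ↦ [T ⊆ B]`. -/
lemma sum_kneser {n k : ℕ} (T : Finset (Fin n)) (hT : T.card ≤ k)
    (A : {s : Finset (Fin n) // s.card = k}) :
    ∑ B : {s : Finset (Fin n) // s.card = k},
      (if A.1 ∩ B.1 = ∅ then (1 : ℝ) else 0) * (if T ⊆ B.1 then 1 else 0) =
    ((n - k - T.card).choose (k - T.card) : ℕ) * (if Disjoint T A.1 then 1 else 0) := by
  have h1 : ∑ B : {s : Finset (Fin n) // s.card = k},
      (if A.1 ∩ B.1 = ∅ then (1 : ℝ) else 0) * (if T ⊆ B.1 then 1 else 0) =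
      ((((A.1)ᶜ).powersetCard k).filter (T ⊆ ·)).card := by
    rw [← Finset.sum_subtype (Finset.univ.powersetCard k) (by simp) (fun B : Finset (Fin n) =>
      (if A.1 ∩ B = ∅ then (1 : ℝ) else 0) * (if T ⊆ B then 1 else 0))]
    simp only [← ite_and, mul_ite, mul_one, mul_zero]
    rw [Finset.sum_boole]
    congr 2
    ext B
    simp only [Finset.mem_filter, Finset.mem_powersetCard, Finset.subset_univ, true_and,
      Finset.subset_compl_iff_disjoint_left, ← Finset.disjoint_iff_inter_eq_empty]
    tauto
  rw [h1]
  split_ifs with h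
  · rw [card_between _ _ _ (Finset.subset_compl_iff_disjoint_right.mpr h) hT,
      Finset.card_compl, A.2, Fintype.card_fin, mul_one]
  · rw [mul_zero, Nat.cast_eq_zero, Finset.card_eq_zero, Finset.filter_eq_empty_iff]
    intro B hB hTB
    exact h (Finset.subset_compl_iff_disjoint_right.mp
      (hTB.trans (Finset.mem_powersetCard.mp hB).1))

lemma disjoint_eq_alternating {α : Type*} [DecidableEq α] (T A : Finset α) :
    (if Disjoint T A then (1 : ℝ) else 0) =
      ∑ S ∈ T.powerset, (-1) ^ S.card * (if S ⊆ A then 1 else 0) := by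
  have h : (if Disjoint T A then (1 : ℝ) else 0) =
      ∏ i ∈ T, (1 - if i ∈ A then (1 : ℝ) else 0) := by
    have : ∀ i, (1 - if i ∈ A then (1 : ℝ) else 0) = if i ∉ A then 1 else 0 := by
      intro i; by_cases h : i ∈ A <;> simp [h]
    simp only [this, Finset.prod_ite_zero, Finset.disjoint_left, Finset.prod_const_one]
  simp only [h, sub_eq_add_neg, Finset.prod_one_add]
  refine Finset.sum_congr rfl fun S _ => ?_
  rw [Finset.prod_neg, Finset.prod_ite_zero, Finset.prod_const_one]
  rfl

/-- A solution of `2 K w = μ w`, with `K` the Kneser matrix, is orthogonal to all functions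
`[T ⊆ ·]` with `|T| ≤ k` when `μ` is none of the listed values. It is applied to
`w = v(0,·) + v(1,·)` for an eigenvector `v` of the quasi-Kneser matrix. -/
lemma pairing_eq_zero {n k : ℕ} (μ : ℝ) (w : {s : Finset (Fin n) // s.card = k} → ℝ)
    (hw : ∀ A, μ * w A = 2 * ∑ B, (if A.1 ∩ B.1 = ∅ then (1 : ℝ) else 0) * w B)
    (hμ : ∀ j ≤ k, μ ≠ 2 * (-1) ^ j * (((n - k - j).choose (k - j) : ℕ) : ℝ))
    (T : Finset (Fin n)) (hT : T.card ≤ k) :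
    ∑ B, w B * (if T ⊆ B.1 then 1 else 0) = 0 := by
  induction T using Finset.strongInduction with
  | H T ih =>
  set c : ℝ := (((n - k - T.card).choose (k - T.card) : ℕ) : ℝ) with hc
  -- The matrix is symmetric, so it can be moved onto the indicator of `T ⊆ ·`.
  have h1 : μ * ∑ B, w B * (if T ⊆ B.1 then 1 else 0) =
      2 * c * ∑ B, w B * (if Disjoint T B.1 then 1 else 0) := by
    calc μ * ∑ B, w B * (if T ⊆ B.1 then 1 else 0)
        = 2 * ∑ B : {s : Finset (Fin n) // s.card = k}, ∑ A, w A * ((if A.1 ∩ B.1 = ∅ then (1 : ℝ) else 0) *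
            (if T ⊆ B.1 then 1 else 0)) := by
          rw [Finset.mul_sum, Finset.mul_sum]
          refine Finset.sum_congr rfl fun B _ => ?_
          rw [← mul_assoc, hw, mul_assoc, Finset.sum_mul]
          congr 1
          refine Finset.sum_congr rfl fun A _ => ?_
          rw [Finset.inter_comm]
          ring
      _ = _ := by
          rw [Finset.sum_comm, mul_assoc, Finset.mul_sum (a := c)]
          congr 1
          refine Finset.sum_congr rfl fun A _ => ?_
          rw [← Finset.mul_sum, sum_kneser T hT]
          ring
  have h2 : ∑ B, w B * (if Disjoint T B.1 then 1 else 0) =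
      (-1) ^ T.card * ∑ B, w B * (if T ⊆ B.1 then 1 else 0) := by
    simp only [disjoint_eq_alternating, Finset.mul_sum (s := T.powerset)]
    rw [Finset.sum_comm, Finset.sum_eq_single T]
    · rw [Finset.mul_sum]
      exact Finset.sum_congr rfl fun B _ => by ring
    · intro S hS hne
      have hS' : S ⊂ T := (Finset.mem_powerset.mp hS).ssubset_of_ne hne
      have := ih S hS' ((Finset.card_le_card hS'.1).trans hT)
      calc _ = (-1) ^ S.card * ∑ B, w B * (if S ⊆ B.1 then 1 else 0) := by
            rw [Finset.mul_sum]
            exact Finset.sum_congr rfl fun B _ => by ring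
        _ = 0 := by rw [this, mul_zero]
    · simp
  rw [h2] at h1
  have h3 : (μ - 2 * (-1) ^ T.card * c) * ∑ B, w B * (if T ⊆ B.1 then 1 else 0) = 0 := by
    linear_combination h1
  exact (mul_eq_zero.mp h3).resolve_left (sub_ne_zero.mpr (hμ _ hT))

/-- The `i`-th of `j` disjoint pairs in `Fin n`, namely `{2i, 2i+1}`, indexed by `Bool`. -/
def pairElt {n j : ℕ} (h : 2 * j ≤ n) (i : Fin j) (c : Bool) : Fin n :=
  ⟨2 * i + c.toNat, by have := i.2; cases c <;> simp <;> omega⟩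

lemma pairElt_inj {n j : ℕ} (h : 2 * j ≤ n) {i i' : Fin j} {c c' : Bool}
    (e : pairElt h i c = pairElt h i' c') : i = i' ∧ c = c' := by
  simp only [pairElt, Fin.mk.injEq] at e
  cases c <;> cases c' <;> simp at e ⊢ <;> omega

/-- The sign `+1` for the first element of a pair and `-1` for the second. -/
def pairSign (c : Bool) : ℝ := if c then -1 else 1

/-- The function `A ↦ ∏_{i<j} ([2i ∈ A] - [2i+1 ∈ A])`. -/
def pairProd {n j : ℕ} (h : 2 * j ≤ n) (A : Finset (Fin n)) : ℝ :=
  ∏ i : Fin j, ∑ c : Bool, pairSign c * (if pairElt h i c ∈ A then 1 else 0)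

/-- The transversal of the pairs selected by `p`. -/
def transversal {n j : ℕ} (h : 2 * j ≤ n) (p : Fin j → Bool) : Finset (Fin n) :=
  Finset.univ.image fun i => pairElt h i (p i)

lemma card_transversal {n j : ℕ} (h : 2 * j ≤ n) (p : Fin j → Bool) :
    (transversal h p).card = j := by
  rw [transversal, Finset.card_image_of_injective _ fun _ _ e => (pairElt_inj h e).1]
  simp

lemma prod_pair_expand {n j : ℕ} (h : 2 * j ≤ n) (P : Fin n → Prop) [DecidablePred P] :
    ∏ i : Fin j, ∑ c : Bool, pairSign c * (if P (pairElt h i c) then (1 : ℝ) else 0) =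
      ∑ p : Fin j → Bool, (∏ i, pairSign (p i)) *
        (if ∀ x ∈ transversal h p, P x then 1 else 0) := by
  rw [Finset.prod_univ_sum, Fintype.piFinset_univ]
  refine Finset.sum_congr rfl fun p _ => ?_
  rw [Finset.prod_mul_distrib, Finset.prod_ite_zero]
  simp [transversal]

lemma pairProd_eq_sum {n j : ℕ} (h : 2 * j ≤ n) (A : Finset (Fin n)) :
    pairProd h A = ∑ p : Fin j → Bool, (∏ i, pairSign (p i)) *
      (if transversal h p ⊆ A then 1 else 0) := by
  simp only [Finset.subset_iff]
  unfold pairProd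
  convert prod_pair_expand h (· ∈ A)

/-- Replacing membership by non-membership negates each of the `j` factors of `pairProd`. -/
lemma neg_one_pow_mul_pairProd {n j : ℕ} (h : 2 * j ≤ n) (A : Finset (Fin n)) :
    (-1) ^ j * pairProd h A = ∑ p : Fin j → Bool, (∏ i, pairSign (p i)) *
      (if Disjoint (transversal h p) A then 1 else 0) := by
  simp only [Finset.disjoint_left]
  have hpow : ((-1 : ℝ)) ^ j = ∏ _i : Fin j, (-1 : ℝ) := by simp
  trans ∏ i : Fin j, ∑ c : Bool, pairSign c * (if pairElt h i c ∉ A then (1 : ℝ) else 0)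
  swap
  · convert prod_pair_expand h (· ∉ A)
  rw [pairProd, hpow, ← Finset.prod_mul_distrib]
  refine Finset.prod_congr rfl fun i _ => ?_
  simp only [Fintype.sum_bool, pairSign]
  by_cases h1 : pairElt h i true ∈ A <;> by_cases h2 : pairElt h i false ∈ A <;> simp [h1, h2]

lemma kneser_pairProd {n j k : ℕ} (h : 2 * j ≤ n) (hj : j ≤ k)
    (A : {s : Finset (Fin n) // s.card = k}) :
    ∑ B : {s : Finset (Fin n) // s.card = k},
      (if A.1 ∩ B.1 = ∅ then (1 : ℝ) else 0) * pairProd h B.1 =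
    (-1) ^ j * ((n - k - j).choose (k - j) : ℕ) * pairProd h A.1 := by
  rw [mul_right_comm, neg_one_pow_mul_pairProd, Finset.sum_mul]
  simp only [pairProd_eq_sum, Finset.mul_sum]
  rw [Finset.sum_comm]
  refine Finset.sum_congr rfl fun p _ => ?_
  have := sum_kneser (transversal h p) ((card_transversal h p).trans_le hj) A
  rw [card_transversal] at this
  rw [mul_assoc, mul_comm (ite _ _ _) (Nat.cast _), ← this, Finset.mul_sum]
  exact Finset.sum_congr rfl fun B _ => by ring

lemma exists_pairProd_ne_zero {n j k : ℕ} (h : 2 * j ≤ n) (hj : j ≤ k) (hn : 2 * k ≤ n) :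
    ∃ A : {s : Finset (Fin n) // s.card = k}, pairProd h A.1 ≠ 0 := by
  -- A `k`-set containing every `2i` and avoiding every `2i+1`.
  obtain ⟨A, h1, h2, h3⟩ := Finset.exists_subsuperset_card_eq
    (s := transversal h fun _ => false) (t := (transversal h fun _ => true)ᶜ) (n := k)
    (by
      intro x hx
      simp only [transversal, Finset.mem_image, Finset.mem_compl, Finset.mem_univ,
        true_and] at hx ⊢
      rintro ⟨i, hi⟩
      obtain ⟨i', hi'⟩ := hx
      exact absurd (pairElt_inj h (hi.trans hi'.symm)).2 (by simp))
    (by rw [card_transversal]; exact hj)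
    (by rw [Finset.card_compl, card_transversal, Fintype.card_fin]; omega)
  refine ⟨⟨A, h3⟩, ?_⟩
  have hf : ∀ i, pairElt h i false ∈ A := fun i =>
    h1 (Finset.mem_image_of_mem _ (Finset.mem_univ i))
  have ht : ∀ i, pairElt h i true ∉ A := fun i hi =>
    Finset.mem_compl.mp (h2 hi) (Finset.mem_image_of_mem _ (Finset.mem_univ i))
  simp [pairProd, hf, ht, pairSign]

theorem stmt_6 (n k : ℕ) (hk : 1 ≤ k) (hn : 2 * k ≤ n) :
    spectrum ℝ
        (Matrix.of fun v w : Bool × {s : Finset (Fin n) // s.card = k} =>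
          if (v.2 : Finset (Fin n)) ∩ (w.2 : Finset (Fin n)) = ∅ then (1 : ℝ) else 0) =
      {0} ∪ {x : ℝ | ∃ j ≤ k, x = 2 * (-1) ^ j * (((n - k - j).choose (k - j) : ℕ) : ℝ)} := by
  change spectrum ℝ (quasiKneser n k) = _
  ext μ
  rw [mem_spectrum_quasiKneser]
  simp only [Set.mem_union, Set.mem_singleton_iff, Set.mem_ofPred_eq]
  constructor
  · rintro ⟨v, hv0, hv⟩
    by_contra! hcon
    obtain ⟨hμ0, hμ⟩ := hcon
    have hvA : ∀ e A, ∑ B, (if A.1 ∩ B.1 = ∅ then (1 : ℝ) else 0) *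
        (v (true, B) + v (false, B)) = μ * v (e, A) := fun e A => by
      rw [← quasiKneser_mulVec n k v e A, hv]; rfl
    have hw := pairing_eq_zero μ (fun B => v (true, B) + v (false, B)) (fun A => by
      linear_combination - hvA true A - hvA false A) hμ
    have hw0 : ∀ T : {s : Finset (Fin n) // s.card = k}, v (true, T) + v (false, T) = 0 := by
      intro T
      have := hw T.1 T.2.le
      rw [Finset.sum_eq_single T] at this
      · simpa using this
      · intro B _ hB
        rw [if_neg, mul_zero]
        intro hTB
        exact hB (Subtype.ext (Finset.eq_of_subset_of_card_le hTB (by rw [B.2, T.2])).symm)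
      · simp
    refine hv0 (funext fun ⟨e, A⟩ => ?_)
    have := hvA e A
    simp only [hw0, mul_zero, Finset.sum_const_zero] at this
    exact (mul_eq_zero.mp this.symm).resolve_left hμ0
  · rintro (rfl | ⟨j, hj, rfl⟩)
    · obtain ⟨A, -⟩ := exists_pairProd_ne_zero (n := n) (j := 0) (k := k) (by omega) (by omega) hn
      refine ⟨fun x => pairSign x.1, fun h => ?_, ?_⟩
      · simpa [pairSign] using congrFun h (true, A)
      · funext ⟨e, B⟩
        rw [quasiKneser_mulVec]
        simp [pairSign]
    · have h : 2 * j ≤ n := by omega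
      obtain ⟨A, hA⟩ := exists_pairProd_ne_zero h hj hn
      refine ⟨fun x => pairProd h x.2.1, fun h0 => hA (congrFun h0 (true, A)), ?_⟩
      funext ⟨e, B⟩
      rw [quasiKneser_mulVec]
      simp only [← two_mul, mul_left_comm _ (2 : ℝ), ← Finset.mul_sum]
      rw [kneser_pairProd h hj]
      simp only [Pi.smul_apply, smul_eq_mul]
      ring
end

section
/- Let k ≥ 1 and n ≥ 2k. Consider the graph 𝒦(n,k) with vertex set {0,1} × {0,1} × {A ⊆ {1,…,n} : |A| = k}, in which ((ε₁,ε₂),A) is adjacent to ((δ₁,δ₂),B) if and only if A ∩ B = ∅ and ε₁ + ε₂ ≡ δ₁ + δ₂ (mod 2). Then the set of eigenvalues of the (real) adjacency matrix of 𝒦(n,k) equals {0} ∪ {2·(−1)^j·C(n−k−j, k−j) : 0 ≤ j ≤ k}. -/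
/-!
Write `x_i(A) = 1` if `i ∈ A` and `0` otherwise, and let `K` be the adjacency operator of the
Kneser graph on `k`-subsets, `(K f)(A) = ∑_{B ∩ A = ∅} f(B)`. Counting the `k`-sets `B ⊇ J` that
avoid `A` gives, for `|J| = j ≤ k`,

  `K (∏_{i ∈ J} x_i) = C(n-k-j, k-j) ∏_{i ∈ J} (1 - x_i)`    (`kneserSum_monomial`).

Both inclusions follow from this identity.

* The right-hand side is `(-1)^j C(n-k-j, k-j) ∏_{i ∈ J} x_i` plus monomials of lower degree, so `K`
  is triangular with respect to the filtration by degree, with the numbers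
  `λ_j = (-1)^j C(n-k-j, k-j)` on the diagonal. As `K` is symmetric, an eigenvector for `λ`
  different from all `λ_j` is orthogonal to every monomial of degree at most `k`, by induction on
  the degree; the monomials of degree `k` are the point masses, so it vanishes
  (`eq_zero_of_kneserSum_eq`).
* Given `j` disjoint pairs `(a_i, b_i)`, the function `∏_i (x_{a_i} - x_{b_i})` is a signed sum of
  monomials of degree `j`. Replacing each `x` by `1 - x` multiplies it by `(-1)^j`, so it is an
  eigenvector for `λ_j` (`exists_kneser_eigenvector`).

The graph `𝒦(n,k)` only sees the parity of the two bits, and each parity class has two elements: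
pulling back a function of `A` doubles the eigenvalue, a function of the bits with zero sum on each
parity class lies in the kernel, and an eigenvector for `μ ≠ 0`, summed over a parity class, yields
an eigenvector of `K` for `μ / 2`.
-/

section Kneser

open Finset

variable {n k : ℕ}

/-- The coordinate function `x_i` on subsets of `Fin n`: the indicator of `i ∈ A`. -/
def coord (i : Fin n) (A : Finset (Fin n)) : ℝ := if i ∈ A then 1 else 0

/-- The adjacency operator of the Kneser graph on `k`-subsets of `Fin n`: the sum of `f` over
the `k`-sets disjoint from `A`. -/
noncomputable def kneserSum (f : {s : Finset (Fin n) // s.card = k} → ℝ)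
    (A : {s : Finset (Fin n) // s.card = k}) : ℝ :=
  ∑ B : {s : Finset (Fin n) // s.card = k},
    if (A : Finset (Fin n)) ∩ (B : Finset (Fin n)) = ∅ then f B else 0

lemma prod_coord (J A : Finset (Fin n)) : ∏ i ∈ J, coord i A = if J ⊆ A then 1 else 0 := by
  simp only [coord, prod_boole]
  rfl

lemma prod_one_sub_coord (J A : Finset (Fin n)) :
    ∏ i ∈ J, (1 - coord i A) = if A ∩ J = ∅ then 1 else 0 := by
  split_ifs with h
  · refine prod_eq_one fun i hi => ?_
    have : i ∉ A := fun hA => disjoint_left.1 (disjoint_iff_inter_eq_empty.2 h) hA hi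
    simp [coord, this]
  · obtain ⟨i, hi⟩ := nonempty_iff_ne_empty.2 h
    rw [mem_inter] at hi
    exact prod_eq_zero hi.2 (by simp [coord, hi.1])

/-- The `k`-sets containing `J` and avoiding `A` correspond to the `(k - |J|)`-subsets of the
complement of `A ∪ J`. -/
lemma card_between_s10 (A J : Finset (Fin n)) (hA : A.card = k) (hJ : J.card ≤ k) (h : A ∩ J = ∅) :
    #{B : {s : Finset (Fin n) // s.card = k} | A ∩ (B : Finset (Fin n)) = ∅ ∧
      J ⊆ (B : Finset (Fin n))} = (n - k - J.card).choose (k - J.card) := by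
  have hd : Disjoint A J := disjoint_iff_inter_eq_empty.2 h
  have hc : ((A ∪ J)ᶜ).card = n - k - J.card := by
    rw [card_compl, Fintype.card_fin, card_union_of_disjoint hd, hA, Nat.sub_sub]
  rw [← hc, ← card_powersetCard]
  refine card_bij (fun B _ => (B : Finset (Fin n)) \ J) ?_ ?_ ?_
  · rintro ⟨B, hB⟩ hm
    simp only [mem_filter, mem_univ, true_and] at hm
    obtain ⟨h1, h2⟩ := hm
    rw [mem_powersetCard]
    refine ⟨?_, by rw [card_sdiff_of_subset h2, hB]⟩
    intro x hx
    have hxA : x ∉ A := fun hxA =>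
      disjoint_left.1 (disjoint_iff_inter_eq_empty.2 h1) hxA (mem_sdiff.1 hx).1
    simp [hxA, (mem_sdiff.1 hx).2]
  · rintro ⟨B, hB⟩ hm ⟨C, hC⟩ hm' heq
    simp only [mem_filter, mem_univ, true_and] at hm hm'
    apply Subtype.ext
    simp only at heq ⊢
    rw [← sdiff_union_of_subset hm.2, heq, sdiff_union_of_subset hm'.2]
  · intro S hS
    obtain ⟨h1, h2⟩ := mem_powersetCard.1 hS
    have hSJ : Disjoint S J := by
      rw [disjoint_left]; intro x hx; have := h1 hx; simp at this; tauto
    have hSA : Disjoint A S := by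
      rw [disjoint_right]; intro x hx; have := h1 hx; simp at this; tauto
    refine ⟨⟨S ∪ J, ?_⟩, ?_, ?_⟩
    · rw [card_union_of_disjoint hSJ]; omega
    · simp only [mem_filter, mem_univ, true_and]
      exact ⟨disjoint_iff_inter_eq_empty.1 (disjoint_union_right.2 ⟨hSA, hd⟩),
        subset_union_right⟩
    · simp only
      rw [union_sdiff_right, sdiff_eq_self_of_disjoint hSJ]

/-- The Kneser operator sends the monomial `∏_{i ∈ J} x_i` of degree `j ≤ k` to
`C(n-k-j, k-j) ∏_{i ∈ J} (1 - x_i)`. -/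
lemma kneserSum_monomial (J : Finset (Fin n)) (hJ : J.card ≤ k)
    (A : {s : Finset (Fin n) // s.card = k}) :
    kneserSum (fun B => ∏ i ∈ J, coord i (B : Finset (Fin n))) A =
      ((n - k - J.card).choose (k - J.card) : ℕ) * ∏ i ∈ J, (1 - coord i (A : Finset (Fin n))) := by
  simp only [kneserSum, prod_coord, prod_one_sub_coord, ← ite_and]
  rw [sum_boole]
  split_ifs with h
  · rw [card_between_s10 _ _ A.2 hJ h, mul_one]
  · rw [mul_zero, Nat.cast_eq_zero, card_eq_zero, filter_eq_empty_iff]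
    rintro B - ⟨h1, h2⟩
    exact h (subset_empty.1 (h1 ▸ inter_subset_inter_left h2))

/-- Disjointness is symmetric, so the Kneser operator is self-adjoint. -/
lemma kneserSum_symm (f g : {s : Finset (Fin n) // s.card = k} → ℝ) :
    ∑ A, kneserSum f A * g A = ∑ A, f A * kneserSum g A := by
  simp only [kneserSum, sum_mul, mul_sum]
  rw [sum_comm]
  refine sum_congr rfl fun A _ => sum_congr rfl fun B _ => ?_
  rw [inter_comm]
  split_ifs <;> simp

/-- The Kneser operator has no eigenvalues besides the `(-1)^j C(n-k-j, k-j)` with `j ≤ k`. -/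
lemma eq_zero_of_kneserSum_eq (f : {s : Finset (Fin n) // s.card = k} → ℝ) (μ : ℝ)
    (hf : ∀ A, kneserSum f A = μ * f A)
    (hμ : ∀ j ≤ k, μ ≠ (-1) ^ j * (((n - k - j).choose (k - j) : ℕ) : ℝ)) : f = 0 := by
  have key : ∀ j ≤ k, ∀ J : Finset (Fin n), J.card = j →
      ∑ A, f A * ∏ i ∈ J, coord i (A : Finset (Fin n)) = 0 := by
    intro j
    induction j using Nat.strong_induction_on with
    | _ j ih =>
      intro hj J hJ
      set c : ℝ := (((n - k - j).choose (k - j) : ℕ) : ℝ) with hc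
      have h1 := kneserSum_symm f (fun B => ∏ i ∈ J, coord i (B : Finset (Fin n)))
      simp only [kneserSum_monomial J (hJ.le.trans hj), hf, prod_sub, prod_const_one, mul_one,
        hJ, ← hc] at h1
      have h2 : ∑ A, f A * (c * ∑ t ∈ J.powerset, (-1) ^ #t *
          ∏ i ∈ t, coord i (A : Finset (Fin n))) =
          c * ∑ t ∈ J.powerset, (-1) ^ #t * ∑ A, f A * ∏ i ∈ t, coord i (A : Finset (Fin n)) := by
        simp only [mul_sum]
        rw [sum_comm]
        refine sum_congr rfl fun t _ => sum_congr rfl fun A _ => ?_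
        ring
      -- Among the subsets of `J`, only `J` itself contributes, by the induction hypothesis.
      rw [h2, sum_eq_single J, hJ] at h1
      · simp only [mul_assoc, ← mul_sum] at h1
        have h3 : (μ - (-1) ^ j * c) * ∑ A, f A * ∏ i ∈ J, coord i (A : Finset (Fin n)) = 0 := by
          linear_combination h1
        exact (mul_eq_zero.1 h3).resolve_left (sub_ne_zero.2 (hμ j hj))
      · intro t ht htJ
        have hlt : #t < j := hJ ▸ card_lt_card ((mem_powerset.1 ht).ssubset_of_ne htJ)
        rw [ih #t hlt (hlt.le.trans hj) t rfl, mul_zero]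
      · simp
  funext A
  have h := key k le_rfl A A.2
  rw [sum_eq_single A] at h
  · simpa [prod_coord] using h
  · intro B _ hBA
    rw [prod_coord, if_neg, mul_zero]
    intro hs
    exact hBA (Subtype.ext (eq_of_subset_of_card_le hs (by rw [A.2, B.2])).symm)
  · simp

/-- For `j ≤ k ≤ n / 2`, the product of `x_{a_i} - x_{b_i}` over `j` disjoint pairs is an
eigenvector of the Kneser operator with eigenvalue `(-1)^j C(n-k-j, k-j)`. -/
lemma exists_kneser_eigenvector (hn : 2 * k ≤ n) (j : ℕ) (hj : j ≤ k) :
    ∃ f : {s : Finset (Fin n) // s.card = k} → ℝ, f ≠ 0 ∧ ∀ A,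
      kneserSum f A = (-1) ^ j * (((n - k - j).choose (k - j) : ℕ) : ℝ) * f A := by
  obtain ⟨e⟩ : Nonempty (Fin j × Bool ↪ Fin n) :=
    Function.Embedding.nonempty_of_card_le (by simp; omega)
  let s : Bool → ℝ := fun b => if b then 1 else -1
  let J : (Fin j → Bool) → Finset (Fin n) := fun p =>
    univ.image fun i => e (i, p i)
  have hinj : ∀ p : Fin j → Bool, Function.Injective fun i => e (i, p i) :=
    fun p a b h => congrArg Prod.fst (e.injective h)
  have hJ : ∀ p, (J p).card = j := fun p => by simp [J, card_image_of_injective _ (hinj p)]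
  have hprod : ∀ (y : Fin n → ℝ), ∏ i : Fin j, (y (e (i, true)) - y (e (i, false))) =
      ∑ p : Fin j → Bool, (∏ i, s (p i)) * ∏ i ∈ J p, y i := by
    intro y
    have h : ∀ i : Fin j, y (e (i, true)) - y (e (i, false)) = ∑ b, s b * y (e (i, b)) := by
      intro i; simp [s]; ring
    simp only [h, Fintype.prod_sum, prod_mul_distrib, J]
    exact sum_congr rfl fun p _ => by rw [prod_image ((hinj p).injOn)]
  refine ⟨fun A => ∏ i : Fin j, (coord (e (i, true)) A.1 - coord (e (i, false)) A.1), ?_, ?_⟩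
  · -- A `k`-set with all the points `a_i` and none of the `b_i`; it exists as `j ≤ k ≤ n - j`.
    obtain ⟨A, h1, h2, h3⟩ := exists_subsuperset_card_eq (n := k)
      (s := J fun _ => true) (t := (J fun _ => false)ᶜ)
      (by
        intro x hx
        simp only [J, mem_image, mem_univ, true_and, mem_compl, not_exists] at hx ⊢
        obtain ⟨i, rfl⟩ := hx
        intro i' h
        simpa using congrArg Prod.snd (e.injective h))
      (by rw [hJ]; exact hj) (by rw [card_compl, hJ, Fintype.card_fin]; omega)
    intro h0
    have h := congrFun h0 ⟨A, h3⟩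
    have ht : ∀ i, e (i, true) ∈ A := fun i => h1 (by simp [J])
    have hf : ∀ i, e (i, false) ∉ A := fun i hi => by
      have := h2 hi
      simp [J] at this
    simp [coord, ht, hf] at h
  · intro A
    have hlin : kneserSum (fun A : {s : Finset (Fin n) // s.card = k} =>
        ∏ i : Fin j, (coord (e (i, true)) A.1 - coord (e (i, false)) A.1)) A =
        ∑ p : Fin j → Bool, (∏ i, s (p i)) * kneserSum (fun B => ∏ i ∈ J p, coord i B.1) A := by
      have hexp := fun B : Finset (Fin n) => hprod fun i => coord i B
      simp only [kneserSum, hexp, mul_sum]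
      rw [sum_comm]
      refine sum_congr rfl fun B _ => ?_
      split_ifs <;> simp
    have hflip := hprod (fun i => 1 - coord i A.1)
    have hneg : ∏ i : Fin j, ((1 - coord (e (i, true)) A.1) - (1 - coord (e (i, false)) A.1)) =
        (-1) ^ j * ∏ i : Fin j, (coord (e (i, true)) A.1 - coord (e (i, false)) A.1) := by
      have hc : (-1 : ℝ) ^ j = ∏ _i : Fin j, (-1 : ℝ) := by simp
      rw [hc, ← prod_mul_distrib]
      exact prod_congr rfl fun i _ => by ring
    rw [hlin]
    simp only [kneserSum_monomial _ ((hJ _).le.trans hj), hJ]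
    rw [hneg] at hflip
    rw [mul_right_comm, hflip, sum_mul]
    exact sum_congr rfl fun p _ => by ring

/-- The operator of `𝒦(n,k)`: Kneser sums of `v` summed over the two bit pairs of the parity of
the given vertex. -/
lemma doubled_mulVec (v : (Bool × Bool) × {s : Finset (Fin n) // s.card = k} → ℝ)
    (a b : Bool) (A : {s : Finset (Fin n) // s.card = k}) :
    (Matrix.of fun v w : (Bool × Bool) × {s : Finset (Fin n) // s.card = k} =>
      if (v.2 : Finset (Fin n)) ∩ (w.2 : Finset (Fin n)) = ∅ ∧
        xor v.1.1 v.1.2 = xor w.1.1 w.1.2 then (1 : ℝ) else 0).mulVec v ((a, b), A) =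
      kneserSum (fun B => v ((a, b), B) + v ((!a, !b), B)) A := by
  simp only [Matrix.mulVec, dotProduct, Matrix.of_apply, kneserSum, Fintype.sum_prod_type,
    Fintype.sum_bool, ← sum_add_distrib]
  refine sum_congr rfl fun B _ => ?_
  by_cases h : (A : Finset (Fin n)) ∩ (B : Finset (Fin n)) = ∅ <;>
    cases a <;> cases b <;> simp [h, add_comm]

end Kneser

/-- A real number is in the spectrum of a matrix iff it has an eigenvector. -/
lemma mem_spectrum_iff_eigenvector {ι : Type*} [Fintype ι] [DecidableEq ι] (M : Matrix ι ι ℝ)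
    (μ : ℝ) : μ ∈ spectrum ℝ M ↔ ∃ v : ι → ℝ, v ≠ 0 ∧ ∀ i, M.mulVec v i = μ * v i := by
  rw [← Matrix.spectrum_toLin', ← Module.End.hasEigenvalue_iff_mem_spectrum]
  constructor
  · intro h
    obtain ⟨v, hv⟩ := h.exists_hasEigenvector
    refine ⟨v, hv.2, fun i => ?_⟩
    simpa using congrFun hv.apply_eq_smul i
  · rintro ⟨v, hv, h⟩
    refine Module.End.hasEigenvalue_of_hasEigenvector (x := v) ⟨?_, hv⟩
    rw [Module.End.mem_eigenspace_iff]
    funext i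
    simpa using h i

theorem stmt_10 (n k : ℕ) (hk : 1 ≤ k) (hn : 2 * k ≤ n) :
    spectrum ℝ
        (Matrix.of fun v w : (Bool × Bool) × {s : Finset (Fin n) // s.card = k} =>
          if (v.2 : Finset (Fin n)) ∩ (w.2 : Finset (Fin n)) = ∅ ∧
              xor v.1.1 v.1.2 = xor w.1.1 w.1.2 then (1 : ℝ) else 0) =
      {0} ∪ {x : ℝ | ∃ j ≤ k, x = 2 * (-1) ^ j * (((n - k - j).choose (k - j) : ℕ) : ℝ)} := by
  ext μ
  rw [mem_spectrum_iff_eigenvector]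
  simp only [Set.mem_union, Set.mem_singleton_iff, Set.mem_ofPred_eq]
  constructor
  · rintro ⟨v, hv, h⟩
    by_contra! hμ
    obtain ⟨hμ0, hμ⟩ := hμ
    have h' : ∀ a b A, kneserSum (fun B => v ((a, b), B) + v ((!a, !b), B)) A =
        μ * v ((a, b), A) := fun a b A => by rw [← doubled_mulVec, h]
    have hzero : ∀ a b, (fun B => v ((a, b), B) + v ((!a, !b), B)) = 0 := by
      intro a b
      apply eq_zero_of_kneserSum_eq _ (μ / 2)
      · intro A
        have h1 := h' a b A
        have h2 := h' (!a) (!b) A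
        simp only [Bool.not_not, add_comm (v ((!a, !b), _))] at h2
        linear_combination (h1 + h2) / 2
      · intro j hj he
        exact hμ j hj (by linear_combination 2 * he)
    apply hv
    funext ⟨⟨a, b⟩, A⟩
    have h1 := h' a b A
    rw [hzero] at h1
    have h2 : μ * v ((a, b), A) = 0 := by
      rw [← h1]; simp [kneserSum]
    exact (mul_eq_zero.1 h2).resolve_left hμ0
  · rintro (rfl | ⟨j, hj, rfl⟩)
    · -- The sign given by the first bit sums to zero on both parity classes.
      refine ⟨fun w => if w.1.1 then 1 else -1, ?_, ?_⟩
      · obtain ⟨A, -, hA⟩ := Finset.exists_subset_card_eq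
          (s := (Finset.univ : Finset (Fin n))) (n := k) (by simp; omega)
        intro h0
        simpa using congrFun h0 ((true, true), ⟨A, hA⟩)
      · rintro ⟨⟨a, b⟩, A⟩
        rw [doubled_mulVec]
        cases a <;> simp [kneserSum]
    · obtain ⟨f, hf, h⟩ := exists_kneser_eigenvector hn j hj
      refine ⟨fun w => f w.2, ?_, ?_⟩
      · intro h0
        exact hf (funext fun A => congrFun h0 ((true, true), A))
      · rintro ⟨⟨a, b⟩, A⟩
        rw [doubled_mulVec]
        have h2 : kneserSum (fun B => f B + f B) A = 2 * kneserSum f A := by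
          simp only [kneserSum, Finset.mul_sum]
          exact Finset.sum_congr rfl fun B _ => by split_ifs <;> ring
        rw [h2, h]
        ring
end

section
/- Let k ≥ 2 and n ≥ 2k with (n,k) ≠ (4,2), and let H be the subgroup of the symmetric group Sym(n) on {1,…,n} consisting of all even permutations σ such that σ({1,…,k}) = {1,…,k} (so H = (Sym(k) × Sym(n−k)) ∩ Alt(n)). Then the number of (H,H)-double cosets HσH in Sym(n) equals 2k+2. -/
/-!
Write `A` for the set of the first `k` points. The double coset of `σ` is determined by the pair
`(|A ∩ σ⁻¹(A)|, sign σ)`, and exactly the `(k + 1) * 2` pairs with first entry at most `k` occur.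

Colour each point `x` by the pair of truth values `(x ∈ A, σ x ∈ A)`. The number
`|A ∩ σ⁻¹(A)|` determines the sizes of all four colour classes, so if `σ` and `τ` have the same
invariant, some permutation `b` carries the `τ`-colouring to the `σ`-colouring. Then `b` and
`a = τ b⁻¹ σ⁻¹` preserve `A` and `τ = a σ b`. The hypotheses force `n ≥ 5`, so two distinct points
share a `σ`-colour, and composing `b` with their transposition allows `b` to be taken even; as
`sign σ = sign τ`, `a` is then even too (`mem_double_of_inv_eq`). The same transposition shows that
both signs occur for every intersection size (`exists_inv_eq`).
-/

/-- The subgroup `(Sym(k) × Sym(n-k)) ∩ Alt(n)` of `Sym(n)` (as a set of permutations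
of `Fin n`): even permutations stabilizing `{1,…,k}` (the first `k` points) setwise. -/
def symSymAltSet (n k : ℕ) : Set (Equiv.Perm (Fin n)) :=
  {σ | (∀ x : Fin n, ((x : ℕ) < k ↔ ((σ x : Fin n) : ℕ) < k)) ∧ Equiv.Perm.sign σ = 1}

/-- The colour of `x` under `σ`: whether `x`, respectively `σ x`, is among the first `k` points. -/
def pointColour (n k : ℕ) (σ : Equiv.Perm (Fin n)) (x : Fin n) : Bool × Bool :=
  (decide ((x : ℕ) < k), decide ((σ x : ℕ) < k))

/-- The complete invariant of the double coset of `σ`: the number of points among the first `k`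
which `σ` sends to the first `k` points, together with the sign of `σ`. -/
def doubleInv (n k : ℕ) (σ : Equiv.Perm (Fin n)) : ℕ × ℤˣ :=
  ((Finset.univ.filter fun x : Fin n => (x : ℕ) < k ∧ (σ x : ℕ) < k).card, Equiv.Perm.sign σ)

lemma card_lt_k {n k : ℕ} (h : k ≤ n) :
    (Finset.univ.filter fun x : Fin n => (x : ℕ) < k).card = k := by
  simp [Fin.card_filter_val_lt, h]

lemma card_perm_lt_k {n k : ℕ} (h : k ≤ n) (σ : Equiv.Perm (Fin n)) :
    (Finset.univ.filter fun x : Fin n => (σ x : ℕ) < k).card = k := by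
  exact (Finset.card_equiv σ (by simp)).trans (card_lt_k h)

/-- The sizes of the four colour classes depend only on `|A ∩ σ⁻¹(A)|`. -/
lemma card_colour_eq {n k : ℕ} (h : k ≤ n) {σ τ : Equiv.Perm (Fin n)}
    (hj : (doubleInv n k σ).1 = (doubleInv n k τ).1) (c : Bool × Bool) :
    (Finset.univ.filter fun x => pointColour n k σ x = c).card =
      (Finset.univ.filter fun x => pointColour n k τ x = c).card := by
  have key : ∀ ρ : Equiv.Perm (Fin n),
      (Finset.univ.filter fun x => pointColour n k ρ x = (true, true)).card
        = (doubleInv n k ρ).1 ∧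
      (Finset.univ.filter fun x => pointColour n k ρ x = (true, true)).card +
        (Finset.univ.filter fun x => pointColour n k ρ x = (true, false)).card = k ∧
      (Finset.univ.filter fun x => pointColour n k ρ x = (true, true)).card +
        (Finset.univ.filter fun x => pointColour n k ρ x = (false, true)).card = k ∧
      (Finset.univ.filter fun x => pointColour n k ρ x = (false, true)).card +
        (Finset.univ.filter fun x => pointColour n k ρ x = (false, false)).card = n - k := by
    intro ρ
    have h1 := card_lt_k h
    have h2 := card_perm_lt_k h ρ
    have h3 := Finset.card_filter_add_card_filter_not (s := (Finset.univ : Finset (Fin n)))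
      (fun x : Fin n => (x : ℕ) < k)
    have e1 := Finset.card_filter_add_card_filter_not
      (s := Finset.univ.filter fun x : Fin n => (x : ℕ) < k) (fun x : Fin n => (ρ x : ℕ) < k)
    have e2 := Finset.card_filter_add_card_filter_not
      (s := Finset.univ.filter fun x : Fin n => (ρ x : ℕ) < k) (fun x : Fin n => (x : ℕ) < k)
    have e3 := Finset.card_filter_add_card_filter_not
      (s := Finset.univ.filter fun x : Fin n => ¬ (x : ℕ) < k) (fun x : Fin n => (ρ x : ℕ) < k)
    simp only [Finset.filter_filter, Finset.card_univ, Fintype.card_fin] at h3 e1 e2 e3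
    simp only [pointColour, doubleInv, Prod.mk.injEq, decide_eq_true_eq, decide_eq_false_iff_not]
    have s1 : (Finset.univ.filter fun x : Fin n => (ρ x : ℕ) < k ∧ (x : ℕ) < k) =
        Finset.univ.filter fun x : Fin n => (x : ℕ) < k ∧ (ρ x : ℕ) < k := by
      simp only [and_comm]
    have s2 : (Finset.univ.filter fun x : Fin n => (ρ x : ℕ) < k ∧ ¬ (x : ℕ) < k) =
        Finset.univ.filter fun x : Fin n => ¬ (x : ℕ) < k ∧ (ρ x : ℕ) < k := by
      simp only [and_comm]
    rw [s1, s2] at e2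
    refine ⟨trivial, ?_, ?_, ?_⟩ <;> omega
  have hσ := key σ
  have hτ := key τ
  rcases c with ⟨_ | _, _ | _⟩ <;> omega

lemma exists_colour_collision {n k : ℕ} (hn : 5 ≤ n) (σ : Equiv.Perm (Fin n)) :
    ∃ p q, p ≠ q ∧ pointColour n k σ p = pointColour n k σ q :=
  Fintype.exists_ne_map_eq_of_card_lt _ (by simp; omega)

lemma pointColour_swap {n k : ℕ} {σ : Equiv.Perm (Fin n)} {p q : Fin n}
    (h : pointColour n k σ p = pointColour n k σ q) (x : Fin n) :
    pointColour n k σ (Equiv.swap p q x) = pointColour n k σ x := by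
  rw [Equiv.swap_apply_def]
  split_ifs with h1 h2
  · rw [h1, h]
  · rw [h2, h]
  · rfl

lemma mem_double_of_inv_eq {n k : ℕ} (h : k ≤ n) (hn : 5 ≤ n) {σ τ : Equiv.Perm (Fin n)}
    (hf : doubleInv n k τ = doubleInv n k σ) :
    ∃ a ∈ symSymAltSet n k, ∃ b ∈ symSymAltSet n k, τ = a * σ * b := by
  have hsign : Equiv.Perm.sign τ = Equiv.Perm.sign σ := congrArg Prod.snd hf
  obtain ⟨b₀, hb₀⟩ : ∃ b : Equiv.Perm (Fin n),
      ∀ x, pointColour n k σ (b x) = pointColour n k τ x := by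
    have e : ∀ c, Nonempty ({x // pointColour n k τ x = c} ≃ {x // pointColour n k σ x = c}) := by
      intro c
      rw [← Fintype.card_eq, Fintype.card_subtype, Fintype.card_subtype]
      exact card_colour_eq h (congrArg Prod.fst hf) c
    exact ⟨Equiv.ofFiberEquiv fun c => (e c).some, Equiv.ofFiberEquiv_map _⟩
  obtain ⟨b, hb, hbs⟩ : ∃ b : Equiv.Perm (Fin n),
      (∀ x, pointColour n k σ (b x) = pointColour n k τ x) ∧ Equiv.Perm.sign b = 1 := by
    rcases Int.units_eq_one_or (Equiv.Perm.sign b₀) with hs | hs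
    · exact ⟨b₀, hb₀, hs⟩
    · obtain ⟨p, q, hpq, hc⟩ := exists_colour_collision (k := k) hn σ
      refine ⟨Equiv.swap p q * b₀, fun x => ?_, ?_⟩
      · rw [Equiv.Perm.mul_apply, pointColour_swap hc, hb₀]
      · rw [Equiv.Perm.sign_mul, Equiv.Perm.sign_swap hpq, hs]; rfl
  simp only [pointColour, Prod.mk.injEq, decide_eq_decide] at hb
  refine ⟨τ * b⁻¹ * σ⁻¹, ⟨fun y => ?_, ?_⟩, b, ⟨fun x => (hb x).1.symm, hbs⟩, by group⟩
  · have := (hb (b⁻¹ (σ⁻¹ y))).2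
    simpa using this
  · simp [hbs, hsign]

lemma inv_eq_of_mem_double {n k : ℕ} {σ a b : Equiv.Perm (Fin n)}
    (ha : a ∈ symSymAltSet n k) (hb : b ∈ symSymAltSet n k) :
    doubleInv n k (a * σ * b) = doubleInv n k σ := by
  refine Prod.ext ?_ ?_
  · simp only [doubleInv]
    refine Finset.card_equiv b fun x => ?_
    have h1 := hb.1 x
    have h2 := ha.1 (σ (b x))
    rw [Finset.mem_filter_univ, Finset.mem_filter_univ, Equiv.Perm.mul_apply,
      Equiv.Perm.mul_apply, h1, h2]
  · simp [doubleInv, ha.2, hb.2]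

lemma exists_inv_eq {n k j : ℕ} (hn : 2 * k ≤ n) (hn5 : 5 ≤ n) (hj : j ≤ k) (ε : ℤˣ) :
    ∃ σ : Equiv.Perm (Fin n), doubleInv n k σ = (j, ε) := by
  -- The involution exchanging `i` and `i + k` for `j ≤ i < k` has intersection size `j`.
  obtain ⟨σ, hσ⟩ : ∃ σ : Equiv.Perm (Fin n), (doubleInv n k σ).1 = j := by
    let g : Fin n → Fin n := fun x =>
      if h : j ≤ (x : ℕ) ∧ (x : ℕ) < k then ⟨x + k, by omega⟩
      else if j + k ≤ (x : ℕ) ∧ (x : ℕ) < 2 * k then ⟨x - k, by omega⟩ else x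
    have hgv : ∀ x, (g x : ℕ) = if j ≤ (x : ℕ) ∧ (x : ℕ) < k then (x : ℕ) + k
        else if j + k ≤ (x : ℕ) ∧ (x : ℕ) < 2 * k then (x : ℕ) - k else x := by
      intro x
      simp only [g]
      split_ifs <;> rfl
    have hg : Function.Involutive g := by
      intro x
      apply Fin.ext
      rw [hgv, hgv]
      split_ifs <;> omega
    refine ⟨hg.toPerm g, ?_⟩
    have : (Finset.univ.filter fun x : Fin n => (x : ℕ) < k ∧ ((hg.toPerm g) x : ℕ) < k) =
        Finset.univ.filter fun x : Fin n => (x : ℕ) < j := by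
      refine Finset.filter_congr fun x _ => ?_
      rw [Function.Involutive.coe_toPerm, hgv]
      split_ifs <;> omega
    rw [doubleInv, this, card_lt_k (by omega)]
  by_cases hs : Equiv.Perm.sign σ = ε
  · exact ⟨σ, Prod.ext hσ hs⟩
  · obtain ⟨p, q, hpq, hc⟩ := exists_colour_collision (k := k) hn5 σ
    refine ⟨σ * Equiv.swap p q, Prod.ext ?_ ?_⟩
    · rw [← hσ]
      simp only [doubleInv]
      refine Finset.card_equiv (Equiv.swap p q) fun x => ?_
      have := pointColour_swap hc x
      simp only [pointColour, Prod.mk.injEq, decide_eq_decide] at this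
      rw [Finset.mem_filter_univ, Finset.mem_filter_univ, Equiv.Perm.mul_apply, this.1]
    · simp only [doubleInv, Equiv.Perm.sign_mul, Equiv.Perm.sign_swap hpq]
      rcases Int.units_eq_one_or (Equiv.Perm.sign σ) with h | h <;>
        rcases Int.units_eq_one_or ε with h' | h' <;> simp_all

theorem stmt_13 (n k : ℕ) (hk : 2 ≤ k) (hn : 2 * k ≤ n) (hnk : ¬(n = 4 ∧ k = 2)) :
    Nat.card {T : Set (Equiv.Perm (Fin n)) //
      ∃ σ : Equiv.Perm (Fin n),
        T = {x | ∃ a ∈ symSymAltSet n k, ∃ b ∈ symSymAltSet n k, x = a * σ * b}} =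
      2 * k + 2 := by
  have hn5 : 5 ≤ n := by omega
  have hkn : k ≤ n := by omega
  -- Double cosets are exactly the fibres of the invariant.
  have hD : ∀ σ : Equiv.Perm (Fin n),
      {x | ∃ a ∈ symSymAltSet n k, ∃ b ∈ symSymAltSet n k, x = a * σ * b} =
        {x | doubleInv n k x = doubleInv n k σ} := by
    intro σ
    ext x
    constructor
    · rintro ⟨a, ha, b, hb, rfl⟩
      exact inv_eq_of_mem_double ha hb
    · exact fun hx => mem_double_of_inv_eq hkn hn5 hx
  let F : Fin (k + 1) × ℤˣ → {T : Set (Equiv.Perm (Fin n)) //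
      ∃ σ : Equiv.Perm (Fin n),
        T = {x | ∃ a ∈ symSymAltSet n k, ∃ b ∈ symSymAltSet n k, x = a * σ * b}} := fun c =>
    ⟨{x | doubleInv n k x = ((c.1 : ℕ), c.2)}, by
      obtain ⟨σ, hσ⟩ := exists_inv_eq hn hn5 (Nat.lt_succ_iff.mp c.1.2) c.2
      exact ⟨σ, by rw [hD, hσ]⟩⟩
  have hF : Function.Bijective F := by
    constructor
    · rintro ⟨c, ε⟩ ⟨d, δ⟩ h
      obtain ⟨σ, hσ⟩ := exists_inv_eq hn hn5 (Nat.lt_succ_iff.mp c.2) ε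
      have hmem : σ ∈ (F (c, ε)).1 := hσ
      rw [h] at hmem
      have h2 : ((c : ℕ), ε) = ((d : ℕ), δ) := hσ.symm.trans hmem
      rw [Prod.mk.injEq] at h2
      exact Prod.ext (Fin.ext h2.1) h2.2
    · rintro ⟨T, σ, rfl⟩
      have hle : (doubleInv n k σ).1 ≤ k := by
        simp only [doubleInv]
        refine le_trans (Finset.card_le_card ?_) (card_lt_k hkn).le
        exact Finset.monotone_filter_right _ fun x _ hx => hx.1
      refine ⟨(⟨(doubleInv n k σ).1, Nat.lt_succ_iff.mpr hle⟩, Equiv.Perm.sign σ), ?_⟩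
      exact Subtype.ext (hD σ).symm
  rw [← Nat.card_eq_of_bijective F hF, Nat.card_prod]
  simp
  ring
end

section
/- Let k ≥ 1 and let 𝒬_k be the set of quasi-perfect matchings of {1,…,2k+1}, i.e., partitions of {1,…,2k+1} into k blocks of size 2 and one block of size 1. If ℱ ⊆ 𝒬_k is intersecting, meaning any two members of ℱ have a common block, then |ℱ| ≤ (2k−1)!!. -/
/-!
A quasi-perfect matching of a set of size `2k+1` is the same thing as an involution with exactly
one fixed point: each point is sent to its partner, the singleton to itself. Two matchings have a
common block precisely when the involutions agree at some point.

The bound is the clique–coclique bound for the conjugation action of the symmetric group. On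
`ZMod (2k+1)` the reflections `x ↦ c - x` are `2k+1` involutions with one fixed point, no two of
which agree anywhere. Hence, for an intersecting family `G` and a permutation `σ`, at most one of
the conjugates `σ τ_c σ⁻¹` lies in `G`. On the other hand, all involutions with exactly one fixed
point have cycle type `2^k`, so they are conjugate with centralizers of order `2^k k!`, and each
pair `(c, f)` with `f ∈ G` is hit by `2^k k!` permutations. Double counting
(`card_le_of_involutions`) gives `(2k+1) |G| 2^k k! ≤ (2k+1)!`, that is, `|G| ≤ (2k-1)!!`.
-/

/-- A quasi-perfect matching of `{1,…,2k+1}`: a partition of `Finset.Icc 1 (2*k+1)`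
into `k` blocks of size 2 and one block of size 1. -/
def IsQPM (k : ℕ) (Q : Finset (Finset ℕ)) : Prop :=
  (∀ B ∈ Q, B ⊆ Finset.Icc 1 (2 * k + 1)) ∧
  (∀ x ∈ Finset.Icc 1 (2 * k + 1), ∃ B ∈ Q, x ∈ B) ∧
  (∀ B ∈ Q, ∀ C ∈ Q, B ≠ C → Disjoint B C) ∧
  (∀ B ∈ Q, B.card = 1 ∨ B.card = 2) ∧
  (Q.filter fun B => B.card = 2).card = k ∧
  (Q.filter fun B => B.card = 1).card = 1

/-- An involution with exactly one fixed point. -/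
def IsQPInvolution {α : Type*} (f : Equiv.Perm α) : Prop :=
  (∀ x, f (f x) = x) ∧ ∃! x, f x = x

theorem IsQPInvolution.cycleType_eq {α : Type*} [Fintype α] [DecidableEq α] {k : ℕ}
    (hα : Fintype.card α = 2 * k + 1) {f : Equiv.Perm α} (hf : IsQPInvolution f) :
    f.cycleType = Multiset.replicate k 2 := by
  obtain ⟨h2, a, ha, hu⟩ := hf
  have hp : f ^ 2 = 1 := by
    ext x
    simp [pow_two, h2]
  have h := Equiv.Perm.cycleType_of_pow_prime_eq_one hp
  have hs : f.support = Finset.univ.erase a := by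
    ext x
    simp only [Equiv.Perm.mem_support, Finset.mem_erase, Finset.mem_univ, and_true]
    exact not_congr ⟨fun hx => hu x hx, fun hx => hx ▸ ha⟩
  have hsum := f.sum_cycleType
  rw [hs, Finset.card_erase_of_mem (Finset.mem_univ a), Finset.card_univ, hα, h,
    Multiset.sum_replicate] at hsum
  rw [h]
  congr 1
  simp at hsum
  omega

theorem IsQPInvolution.card_centralizer {α : Type*} [Fintype α] [DecidableEq α] {k : ℕ}
    (hα : Fintype.card α = 2 * k + 1) {f : Equiv.Perm α} (hf : IsQPInvolution f) :
    Nat.card (Subgroup.centralizer {f}) = 2 ^ k * k.factorial := by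
  rw [Equiv.Perm.nat_card_centralizer, hf.cycleType_eq hα, hα]
  rcases Nat.eq_zero_or_pos k with rfl | hk
  · simp
  · have : (2 * k + 1 - k * 2) = 1 := by omega
    rw [Multiset.toFinset_replicate, if_neg hk.ne']
    simp [this]

/-- The permutations conjugating `g` to `f` form a coset of the centralizer of `g`. -/
theorem IsQPInvolution.card_conjugators {α : Type*} [Fintype α] [DecidableEq α] {k : ℕ}
    (hα : Fintype.card α = 2 * k + 1) {f g : Equiv.Perm α} (hf : IsQPInvolution f)
    (hg : IsQPInvolution g) :
    2 ^ k * k.factorial ≤ (Finset.univ.filter fun σ => σ * g * σ⁻¹ = f).card := by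
  obtain ⟨σ, hσ⟩ := isConj_iff.1
    (Equiv.Perm.isConj_iff_cycleType_eq.2 ((hg.cycleType_eq hα).trans (hf.cycleType_eq hα).symm))
  rw [← hg.card_centralizer hα, ← Fintype.card_subtype, ← Nat.card_eq_fintype_card]
  refine Nat.card_le_card_of_injective
    (fun π : Subgroup.centralizer {g} => ⟨σ * π.1, ?_⟩) ?_
  · have hπ := Subgroup.mem_centralizer_singleton_iff.1 π.2
    have : π.1 * g * π.1⁻¹ = g := by
      rw [mul_inv_eq_iff_eq_mul]
      exact hπ
    calc σ * π.1 * g * (σ * π.1)⁻¹ = σ * (π.1 * g * π.1⁻¹) * σ⁻¹ := by group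
      _ = f := by rw [this, hσ]
  · intro π ρ h
    exact Subtype.ext (mul_left_cancel (Subtype.ext_iff.1 h))

/-- The clique formed by the reflections `x ↦ c - x` of `ZMod (2k+1)`, transported to `α`. -/
theorem exists_reflections {α : Type*} [Fintype α] {k : ℕ} (hα : Fintype.card α = 2 * k + 1) :
    ∃ τ : ZMod (2 * k + 1) → Equiv.Perm α,
      (∀ c, IsQPInvolution (τ c)) ∧ ∀ c d x, τ c x = τ d x → c = d := by
  have e : α ≃ ZMod (2 * k + 1) := Fintype.equivOfCardEq (by rw [hα, ZMod.card])
  have hhalf : (2 : ZMod (2 * k + 1)) * (k + 1) = 1 := by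
    have h0 : ((2 * k + 1 : ℕ) : ZMod (2 * k + 1)) = 0 := ZMod.natCast_self _
    push_cast at h0
    linear_combination h0
  refine ⟨fun c => e.trans ((Equiv.subLeft c).trans e.symm), fun c => ⟨fun x => ?_, ?_⟩, ?_⟩
  · simp
  · -- The fixed point solves `2x = c`, and `k + 1` is the inverse of `2`.
    refine ⟨e.symm ((k + 1) * c), ?_, fun y hy => ?_⟩
    · simp only [Equiv.trans_apply, Equiv.apply_symm_apply, Equiv.subLeft_apply,
        EmbeddingLike.apply_eq_iff_eq]
      linear_combination -c * hhalf
    · simp only [Equiv.trans_apply, Equiv.subLeft_apply, Equiv.symm_apply_eq] at hy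
      rw [Equiv.eq_symm_apply]
      linear_combination -(k + 1 : ZMod (2 * k + 1)) * hy - e y * hhalf
  · intro c d x h
    simpa using h

theorem card_le_of_involutions {α : Type*} [Fintype α] [DecidableEq α] {k : ℕ} (hk : 1 ≤ k)
    (hα : Fintype.card α = 2 * k + 1) (G : Finset (Equiv.Perm α))
    (hG : ∀ f ∈ G, IsQPInvolution f) (hint : ∀ f ∈ G, ∀ g ∈ G, ∃ x, f x = g x) :
    G.card ≤ Nat.doubleFactorial (2 * k - 1) := by
  obtain ⟨τ, hτ, hdisj⟩ := exists_reflections hα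
  have key := Finset.card_mul_le_card_mul
    (s := (Finset.univ : Finset (ZMod (2 * k + 1))) ×ˢ G)
    (t := (Finset.univ : Finset (Equiv.Perm α))) (m := 2 ^ k * k.factorial) (n := 1)
    (fun p σ => σ * τ p.1 * σ⁻¹ = p.2) ?_ ?_
  · rw [Finset.card_product, Finset.card_univ, Finset.card_univ, ZMod.card, Fintype.card_perm,
      hα] at key
    obtain ⟨m, rfl⟩ : ∃ m, k = m + 1 := ⟨k - 1, by omega⟩
    have h1 : (2 * (m + 1)).factorial
        = 2 ^ (m + 1) * (m + 1).factorial * Nat.doubleFactorial (2 * m + 1) := by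
      rw [← Nat.doubleFactorial_two_mul]
      exact Nat.factorial_eq_mul_doubleFactorial (2 * m + 1)
    rw [Nat.factorial_succ (2 * (m + 1)), h1, mul_one, mul_assoc] at key
    have key2 := Nat.le_of_mul_le_mul_left key (Nat.succ_pos _)
    rw [mul_comm] at key2
    exact Nat.le_of_mul_le_mul_left key2 (by positivity)
  · rintro ⟨c, f⟩ hp
    exact (hG f (Finset.mem_product.1 hp).2).card_conjugators hα (hτ c)
  · intro σ _
    rw [Finset.card_le_one]
    rintro ⟨c, f⟩ hp ⟨d, g⟩ hq
    simp only [Finset.mem_bipartiteBelow, Finset.mem_product, Finset.mem_univ, true_and] at hp hq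
    obtain ⟨hf, rfl⟩ := hp
    obtain ⟨hg, rfl⟩ := hq
    obtain ⟨x, hx⟩ := hint _ hf _ hg
    obtain rfl : c = d := hdisj c d (σ⁻¹ x) (by simpa using hx)
    rfl

/-- The involution of a quasi-perfect matching. The block of a fixed point `x` is `{x, x} = {x}`,
so a single formula covers both kinds of block. -/
theorem IsQPM.exists_involution {k : ℕ} {Q : Finset (Finset ℕ)} (hQ : IsQPM k Q) :
    ∃ f : Equiv.Perm (Finset.Icc 1 (2 * k + 1)), IsQPInvolution f ∧
      ∀ x y, f x = y ↔ {x.1, y.1} ∈ Q := by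
  obtain ⟨hsub, hcov, hdis, hcard, -, hone⟩ := hQ
  have hex : ∀ x : Finset.Icc 1 (2 * k + 1), ∃ y : Finset.Icc 1 (2 * k + 1), {x.1, y.1} ∈ Q := by
    rintro ⟨x, hx⟩
    obtain ⟨B, hB, hxB⟩ := hcov x hx
    rcases hcard B hB with h | h
    · obtain ⟨a, rfl⟩ := Finset.card_eq_one.1 h
      obtain rfl := Finset.mem_singleton.1 hxB
      exact ⟨⟨x, hx⟩, by simpa using hB⟩
    · obtain ⟨a, b, -, rfl⟩ := Finset.card_eq_two.1 h
      rcases Finset.mem_insert.1 hxB with rfl | h'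
      · exact ⟨⟨b, hsub _ hB (by simp)⟩, hB⟩
      · obtain rfl := Finset.mem_singleton.1 h'
        exact ⟨⟨a, hsub _ hB (by simp)⟩, by rwa [Finset.pair_comm]⟩
  have huniq : ∀ x y z : ℕ, {x, y} ∈ Q → {x, z} ∈ Q → y = z := by
    intro x y z hy hz
    have heq : ({x, y} : Finset ℕ) = {x, z} := by
      by_contra hne
      exact Finset.disjoint_left.1 (hdis _ hy _ hz hne) (Finset.mem_insert_self x _)
        (Finset.mem_insert_self x _)
    have h1 : y ∈ ({x, z} : Finset ℕ) := heq ▸ (by simp)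
    have h2 : z ∈ ({x, y} : Finset ℕ) := heq ▸ (by simp)
    simp only [Finset.mem_insert, Finset.mem_singleton] at h1 h2
    omega
  choose f hf using hex
  have hiff : ∀ x y, f x = y ↔ {x.1, y.1} ∈ Q := fun x y =>
    ⟨fun h => h ▸ hf x, fun h => Subtype.ext (huniq _ _ _ (hf x) h)⟩
  have hinv : Function.Involutive f := fun x => by
    rw [hiff, Finset.pair_comm]
    exact hf x
  refine ⟨hinv.toPerm, ⟨hinv, ?_⟩, hiff⟩
  obtain ⟨B, hB⟩ := Finset.card_eq_one.1 hone
  have hBmem : B ∈ Q.filter fun B => B.card = 1 := hB ▸ Finset.mem_singleton_self B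
  obtain ⟨hBQ, hB1⟩ := Finset.mem_filter.1 hBmem
  obtain ⟨a, rfl⟩ := Finset.card_eq_one.1 hB1
  refine ⟨⟨a, hsub _ hBQ (by simp)⟩, ?_, fun y hy => ?_⟩
  · exact (hiff _ _).2 (by simpa using hBQ)
  · have hyQ : {y.1} ∈ Q := by simpa using (hiff y y).1 hy
    have : {y.1} ∈ Q.filter fun B => B.card = 1 := Finset.mem_filter.2 ⟨hyQ, by simp⟩
    rw [hB] at this
    exact Subtype.ext (by simpa using this)

theorem IsQPM.exists_eq_pair {k : ℕ} {Q : Finset (Finset ℕ)} (hQ : IsQPM k Q) {B : Finset ℕ}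
    (hB : B ∈ Q) : ∃ x y : Finset.Icc 1 (2 * k + 1), B = {x.1, y.1} := by
  obtain ⟨hsub, -, -, hcard, -, -⟩ := hQ
  have hs := hsub B hB
  rcases hcard B hB with h | h
  · obtain ⟨a, rfl⟩ := Finset.card_eq_one.1 h
    exact ⟨⟨a, hs (by simp)⟩, ⟨a, hs (by simp)⟩, by simp⟩
  · obtain ⟨a, b, -, rfl⟩ := Finset.card_eq_two.1 h
    exact ⟨⟨a, hs (by simp)⟩, ⟨b, hs (by simp)⟩, rfl⟩

theorem stmt_16 (k : ℕ) (hk : 1 ≤ k) (F : Finset (Finset (Finset ℕ)))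
    (hF : ∀ Q ∈ F, IsQPM k Q)
    (hint : ∀ Q ∈ F, ∀ R ∈ F, ∃ B, B ∈ Q ∧ B ∈ R) :
    F.card ≤ Nat.doubleFactorial (2 * k - 1) := by
  classical
  choose φ hφ hφiff using fun Q : F => (hF Q.1 Q.2).exists_involution
  have hinj : Function.Injective φ := by
    have hle : ∀ Q R : F, φ Q = φ R → Q.1 ⊆ R.1 := by
      intro Q R h B hB
      obtain ⟨x, y, rfl⟩ := (hF Q.1 Q.2).exists_eq_pair hB
      rwa [← hφiff R, ← h, hφiff Q]
    exact fun Q R h => Subtype.ext ((hle Q R h).antisymm (hle R Q h.symm))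
  rw [← Finset.card_attach, ← Finset.card_image_of_injective _ hinj]
  refine card_le_of_involutions hk (by simp) _ ?_ ?_
  · intro f hf
    obtain ⟨Q, -, rfl⟩ := Finset.mem_image.1 hf
    exact hφ Q
  · intro f hf g hg
    obtain ⟨Q, -, rfl⟩ := Finset.mem_image.1 hf
    obtain ⟨R, -, rfl⟩ := Finset.mem_image.1 hg
    obtain ⟨B, hBQ, hBR⟩ := hint Q.1 Q.2 R.1 R.2
    obtain ⟨x, y, rfl⟩ := (hF Q.1 Q.2).exists_eq_pair hBQ
    exact ⟨x, ((hφiff Q x y).2 hBQ).trans ((hφiff R x y).2 hBR).symm⟩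
end

section
/- Let k ≥ 1 and let 𝒬_k be the set of quasi-perfect matchings of {1,…,2k+1}, i.e., partitions of {1,…,2k+1} into k blocks of size 2 and one block of size 1. Suppose ℱ ⊆ 𝒬_k is intersecting (any two members have a common block) and |ℱ| = (2k−1)!!. Then there is a subset b of {1,…,2k+1} with |b| ∈ {1,2} such that ℱ = {Q ∈ 𝒬_k : b is a block of Q}. Conversely, every such family is intersecting of size (2k−1)!!. -/
/-! ### Perfect matchings and their number -/

/-- A perfect matching of the vertex set `S`, given by its set of edges: pairwise disjoint
two-element subsets that cover `S`. -/
def IsPM (S : Finset ℕ) (P : Finset (Finset ℕ)) : Prop :=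
  (∀ b ∈ P, b.card = 2 ∧ b ⊆ S) ∧
  (∀ b ∈ P, ∀ c ∈ P, b ≠ c → Disjoint b c) ∧
  (∀ x ∈ S, ∃ b ∈ P, x ∈ b)

open Classical in
/-- The finite set of all perfect matchings of `S`. -/
noncomputable def pms (S : Finset ℕ) : Finset (Finset (Finset ℕ)) :=
  S.powerset.powerset.filter (IsPM S)

lemma mem_pms {S : Finset ℕ} {P : Finset (Finset ℕ)} : P ∈ pms S ↔ IsPM S P := by
  simp only [pms, Finset.mem_filter, Finset.mem_powerset, and_iff_right_iff_imp]
  intro h b hb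
  exact Finset.mem_powerset.2 (h.1 b hb).2

lemma IsPM.eq_of_mem {S : Finset ℕ} {P : Finset (Finset ℕ)} (h : IsPM S P)
    {b c : Finset ℕ} (hb : b ∈ P) (hc : c ∈ P) {x : ℕ} (hxb : x ∈ b) (hxc : x ∈ c) : b = c := by
  by_contra hne
  exact Finset.disjoint_left.1 (h.2.1 b hb c hc hne) hxb hxc

lemma IsPM.biUnion {S : Finset ℕ} {P M : Finset (Finset ℕ)} (h : IsPM S P) (hM : M ⊆ P) :
    IsPM (M.biUnion id) M := by
  refine ⟨fun b hb => ⟨(h.1 b (hM hb)).1, Finset.subset_biUnion_of_mem id hb⟩,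
    fun b hb c hc => h.2.1 b (hM hb) c (hM hc), fun x hx => ?_⟩
  simpa using hx

lemma IsPM.biUnion_eq {S : Finset ℕ} {P : Finset (Finset ℕ)} (h : IsPM S P) :
    P.biUnion id = S := by
  ext x
  simp only [Finset.mem_biUnion, id]
  exact ⟨fun ⟨b, hb, hx⟩ => (h.1 b hb).2 hx, h.2.2 x⟩

lemma IsPM.card {S : Finset ℕ} {P : Finset (Finset ℕ)} (h : IsPM S P) :
    S.card = 2 * P.card := by
  have hsum : ∑ b ∈ P, (id b).card = ∑ _b ∈ P, 2 :=
    Finset.sum_congr rfl (fun b hb => (h.1 b hb).1)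
  rw [← h.biUnion_eq, Finset.card_biUnion (t := id) (fun b hb c hc hne => h.2.1 b hb c hc hne),
    hsum, Finset.sum_const, smul_eq_mul, mul_comm]

/-- Perfect matchings of `S` extending a perfect matching `M` of `U ⊆ S` correspond to perfect
matchings of `S \ U`. -/
lemma card_filter_subset {S U : Finset ℕ} {M : Finset (Finset ℕ)} (hU : U ⊆ S)
    (hM : IsPM U M) : ((pms S).filter (fun P => M ⊆ P)).card = (pms (S \ U)).card := by
  have key : ∀ P' : Finset (Finset ℕ), IsPM (S \ U) P' → Disjoint P' M := by
    intro P' hP'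
    rw [Finset.disjoint_left]
    intro b hb hbM
    obtain ⟨x, hx⟩ := Finset.card_pos.1 (by rw [(hP'.1 b hb).1]; norm_num : 0 < b.card)
    exact (Finset.mem_sdiff.1 ((hP'.1 b hb).2 hx)).2 ((hM.1 b hbM).2 hx)
  refine Finset.card_bij' (fun P _ => P \ M) (fun P' _ => P' ∪ M) ?_ ?_ ?_ ?_
  · intro P hP
    rw [Finset.mem_filter, mem_pms] at hP
    obtain ⟨hP, hMP⟩ := hP
    rw [mem_pms]
    refine ⟨fun b hb => ?_, fun b hb c hc => ?_, fun x hx => ?_⟩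
    · rw [Finset.mem_sdiff] at hb
      refine ⟨(hP.1 b hb.1).1, fun x hx => Finset.mem_sdiff.2 ⟨(hP.1 b hb.1).2 hx, fun hxU => ?_⟩⟩
      obtain ⟨c, hc, hxc⟩ := hM.2.2 x hxU
      exact hb.2 (hP.eq_of_mem hb.1 (hMP hc) hx hxc ▸ hc)
    · exact hP.2.1 b (Finset.mem_sdiff.1 hb).1 c (Finset.mem_sdiff.1 hc).1
    · rw [Finset.mem_sdiff] at hx
      obtain ⟨b, hb, hxb⟩ := hP.2.2 x hx.1
      exact ⟨b, Finset.mem_sdiff.2 ⟨hb, fun hbM => hx.2 ((hM.1 b hbM).2 hxb)⟩, hxb⟩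
  · intro P' hP'
    rw [mem_pms] at hP'
    rw [Finset.mem_filter, mem_pms]
    have hd : ∀ b ∈ P', ∀ c ∈ M, Disjoint b c := fun b hb c hc =>
      (Finset.disjoint_of_subset_right (hM.1 c hc).2
        (Finset.disjoint_of_subset_left (hP'.1 b hb).2 Finset.sdiff_disjoint))
    refine ⟨⟨fun b hb => ?_, fun b hb c hc hne => ?_, fun x hx => ?_⟩, Finset.subset_union_right⟩
    · rcases Finset.mem_union.1 hb with hb | hb
      · exact ⟨(hP'.1 b hb).1, (hP'.1 b hb).2.trans Finset.sdiff_subset⟩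
      · exact ⟨(hM.1 b hb).1, (hM.1 b hb).2.trans hU⟩
    · rcases Finset.mem_union.1 hb with hb | hb <;> rcases Finset.mem_union.1 hc with hc | hc
      · exact hP'.2.1 b hb c hc hne
      · exact hd b hb c hc
      · exact (hd c hc b hb).symm
      · exact hM.2.1 b hb c hc hne
    · by_cases hxU : x ∈ U
      · obtain ⟨b, hb, hxb⟩ := hM.2.2 x hxU
        exact ⟨b, Finset.mem_union_right _ hb, hxb⟩
      · obtain ⟨b, hb, hxb⟩ := hP'.2.2 x (Finset.mem_sdiff.2 ⟨hx, hxU⟩)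
        exact ⟨b, Finset.mem_union_left _ hb, hxb⟩
  · intro P hP
    exact Finset.sdiff_union_of_subset (Finset.mem_filter.1 hP).2
  · intro P' hP'
    exact Finset.union_sdiff_cancel_right (key P' (mem_pms.1 hP'))

lemma isPM_singleton {b : Finset ℕ} (hb : b.card = 2) : IsPM b {b} := by
  refine ⟨?_, ?_, ?_⟩ <;> simp_all

lemma card_star {S b : Finset ℕ} (hbS : b ⊆ S) (hb : b.card = 2) :
    ((pms S).filter (fun P => b ∈ P)).card = (pms (S \ b)).card := by
  rw [← card_filter_subset hbS (isPM_singleton hb)]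
  simp

lemma card_pms (r : ℕ) : ∀ S : Finset ℕ, S.card = 2 * r →
    (pms S).card = Nat.doubleFactorial (2 * r - 1) := by
  induction r with
  | zero =>
    intro S hS
    obtain rfl : S = ∅ := by simpa using hS
    have : pms ∅ = {∅} := by
      ext P
      rw [mem_pms, Finset.mem_singleton]
      constructor
      · intro h
        have := h.card
        simpa using this.symm
      · rintro rfl
        simp [IsPM]
    simp [this]
  | succ r ih =>
    intro S hS
    obtain ⟨x, hx⟩ := Finset.card_pos.1 (by omega : 0 < S.card)
    -- Split the matchings according to the partner `y` of the fixed vertex `x`.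
    have hsplit : pms S = (S.erase x).biUnion
        (fun y => (pms S).filter (fun P => ({x, y} : Finset ℕ) ∈ P)) := by
      ext P
      simp only [Finset.mem_biUnion, Finset.mem_filter, Finset.mem_erase]
      refine ⟨fun h => ?_, fun ⟨_, _, h, _⟩ => h⟩
      obtain ⟨b, hb, hxb⟩ := (mem_pms.1 h).2.2 x hx
      obtain ⟨hb2, hbS⟩ := (mem_pms.1 h).1 b hb
      obtain ⟨y, hy⟩ := Finset.card_eq_one.1
        (by rw [Finset.card_erase_of_mem hxb, hb2] : (b.erase x).card = 1)
      have hyb : y ∈ b.erase x := by simp [hy]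
      have hbe : b = {x, y} := by rw [← Finset.insert_erase hxb, hy]
      exact ⟨y, ⟨(Finset.mem_erase.1 hyb).1, hbS (Finset.mem_erase.1 hyb).2⟩, h, hbe ▸ hb⟩
    rw [hsplit, Finset.card_biUnion]
    · have : ∀ y ∈ S.erase x, ((pms S).filter (fun P => ({x, y} : Finset ℕ) ∈ P)).card
          = Nat.doubleFactorial (2 * r - 1) := by
        intro y hy
        rw [Finset.mem_erase] at hy
        have h2 : ({x, y} : Finset ℕ).card = 2 := Finset.card_pair (Ne.symm hy.1)
        have hs : ({x, y} : Finset ℕ) ⊆ S := by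
          intro z hz
          rcases Finset.mem_insert.1 hz with rfl | hz
          · exact hx
          · exact Finset.mem_singleton.1 hz ▸ hy.2
        rw [card_star hs h2]
        apply ih
        rw [Finset.card_sdiff_of_subset hs, h2, hS]
        omega
      rw [Finset.sum_congr rfl this, Finset.sum_const, Finset.card_erase_of_mem hx, hS, smul_eq_mul]
      rcases r with _ | r
      · simp
      · have e1 : 2 * (r + 1 + 1) - 1 = (2 * r + 1) + 2 := by omega
        have e2 : 2 * (r + 1) - 1 = 2 * r + 1 := by omega
        rw [e1, e2, Nat.doubleFactorial_add_two]
    · intro y hy z hz hyz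
      rw [Function.onFun, Finset.disjoint_left]
      intro P hP hP'
      rw [Finset.mem_filter] at hP hP'
      have he := (mem_pms.1 hP.1).eq_of_mem hP.2 hP'.2
        (Finset.mem_insert_self x _) (Finset.mem_insert_self x _)
      have : y ∈ ({x, z} : Finset ℕ) := he ▸ by simp
      rcases Finset.mem_insert.1 this with h | h
      · exact (Finset.mem_erase.1 hy).1 h
      · exact hyz (Finset.mem_singleton.1 h)

/-! ### Extending a set of edges inside an intersecting family -/

/-- The `2 · #M` vertices of a partial matching `M` are covered by edges of `P`, so at least `#M`
of the `n` edges of `P` are not disjoint from them. -/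
lemma card_disjoint_le {n : ℕ} {S : Finset ℕ} (hS : S.card = 2 * n) {M P P₀ : Finset (Finset ℕ)}
    (hP : IsPM S P) (hP₀ : IsPM S P₀) (hM : M ⊆ P₀) :
    (P.filter (fun f => Disjoint f (M.biUnion id))).card ≤ n - M.card := by
  have hU := (hP₀.biUnion hM).card
  have h1 : (M.biUnion id) ⊆
      (P.filter (fun f => ¬ Disjoint f (M.biUnion id))).biUnion id := by
    intro x hx
    have hxS : x ∈ S := by
      rw [← hP₀.biUnion_eq]
      exact Finset.biUnion_subset_biUnion_of_subset_left id hM hx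
    obtain ⟨b, hb, hxb⟩ := hP.2.2 x hxS
    refine Finset.mem_biUnion.2 ⟨b, Finset.mem_filter.2 ⟨hb, fun hd => ?_⟩, hxb⟩
    exact Finset.disjoint_left.1 hd hxb hx
  have h2 := Finset.card_le_card h1
  have h3 := (hP.biUnion
    (Finset.filter_subset (fun f => ¬ Disjoint f (M.biUnion id)) P)).card
  have h4 := Finset.card_filter_add_card_filter_not (s := P)
    (fun f => Disjoint f (M.biUnion id))
  have h5 := hP.card
  omega

/-- The two ends of an edge `e ∉ P` lie on different edges of `P`. -/
lemma card_disjoint_le_two {n : ℕ} {S : Finset ℕ} (hS : S.card = 2 * n) {P : Finset (Finset ℕ)}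
    {e : Finset ℕ} (hP : IsPM S P) (heS : e ⊆ S) (he : e.card = 2) (heP : e ∉ P) :
    (P.filter (fun f => Disjoint f e)).card ≤ n - 2 := by
  have h4 := Finset.card_filter_add_card_filter_not (s := P) (fun f => Disjoint f e)
  have h5 := hP.card
  obtain ⟨x, y, hxy, rfl⟩ := Finset.card_eq_two.1 he
  obtain ⟨b, hb, hxb⟩ := hP.2.2 x (heS (by simp))
  obtain ⟨c, hc, hyc⟩ := hP.2.2 y (heS (by simp))
  have hbc : b ≠ c := by
    rintro rfl
    apply heP
    have : ({x, y} : Finset ℕ) = b :=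
      Finset.eq_of_subset_of_card_le (by simp [Finset.insert_subset_iff, hxb, hyc])
        (by rw [he, (hP.1 b hb).1])
    rwa [this]
  have h6 : ({b, c} : Finset (Finset ℕ)) ⊆ P.filter (fun f => ¬ Disjoint f {x, y}) := by
    intro d hd
    rw [Finset.mem_filter]
    rcases Finset.mem_insert.1 hd with rfl | hd
    · exact ⟨hb, fun h => Finset.disjoint_left.1 h hxb (by simp)⟩
    · obtain rfl := Finset.mem_singleton.1 hd
      exact ⟨hc, fun h => Finset.disjoint_left.1 h hyc (by simp)⟩
  have h7 := Finset.card_le_card h6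
  rw [Finset.card_pair hbc] at h7
  omega

/-- Let `P ∈ F` contain no edge of `M`. A member of `F` containing `M` shares an edge with `P`, and
this edge is disjoint from `M`, so the extensions of `M` by such edges account for all those
members. -/
lemma card_filter_le_mul {S : Finset ℕ} {F : Finset (Finset (Finset ℕ))} (hF : ∀ P ∈ F, IsPM S P)
    (hI : ∀ P ∈ F, ∀ R ∈ F, ∃ b, b ∈ P ∧ b ∈ R) {M P : Finset (Finset ℕ)} (hP : P ∈ F)
    (hMP : ∀ b ∈ M, b ∉ P) {N : ℕ}
    (hN : ∀ f ∈ P, (F.filter (fun R => insert f M ⊆ R)).card ≤ N) :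
    (F.filter (fun R => M ⊆ R)).card ≤
      (P.filter (fun f => Disjoint f (M.biUnion id))).card * N := by
  have hsub : F.filter (fun R => M ⊆ R) ⊆
      (P.filter (fun f => Disjoint f (M.biUnion id))).biUnion
        (fun f => F.filter (fun R => insert f M ⊆ R)) := by
    intro R hR
    rw [Finset.mem_filter] at hR
    obtain ⟨f, hfP, hfR⟩ := hI P hP R hR.1
    refine Finset.mem_biUnion.2 ⟨f, Finset.mem_filter.2 ⟨hfP, ?_⟩,
      Finset.mem_filter.2 ⟨hR.1, Finset.insert_subset hfR hR.2⟩⟩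
    rw [Finset.disjoint_biUnion_right]
    intro b hb
    exact (hF R hR.1).2.1 f hfR b (hR.2 hb) (fun h => hMP b hb (h ▸ hfP))
  refine (Finset.card_le_card hsub).trans (Finset.card_biUnion_le_card_mul _ _ _ ?_)
  intro f hf
  exact hN f (Finset.mem_filter.1 hf).1

/-- `C` is a cover of `F`: every member of `F` has an edge in `C`. -/
def Covers (F : Finset (Finset (Finset ℕ))) (C : Finset (Finset ℕ)) : Prop :=
  ∀ P ∈ F, ∃ b ∈ C, b ∈ P

/-- If no cover has fewer than `t` edges, a set of `i < t` edges is missed by some member of `F`,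
so it extends in at most `n - i` ways to a set of `i + 1` edges; iterate until `t` edges are
fixed, and then count all perfect matchings containing them. -/
lemma card_filter_le_descFactorial {n t : ℕ} {S : Finset ℕ} (hS : S.card = 2 * n)
    {F : Finset (Finset (Finset ℕ))} (hF : ∀ P ∈ F, IsPM S P)
    (hI : ∀ P ∈ F, ∀ R ∈ F, ∃ b, b ∈ P ∧ b ∈ R) (hmin : ∀ C, Covers F C → t ≤ C.card) (htn : t ≤ n)
    (d : ℕ) : ∀ M : Finset (Finset ℕ), M.card + d = t →
    (F.filter (fun R => M ⊆ R)).card ≤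
      (n - M.card).descFactorial d * Nat.doubleFactorial (2 * (n - t) - 1) := by
  induction d with
  | zero =>
    intro M hM
    rcases (F.filter (fun R => M ⊆ R)).eq_empty_or_nonempty with h0 | ⟨P₀, hP₀⟩
    · simp [h0]
    rw [Finset.mem_filter] at hP₀
    have hPM := hF P₀ hP₀.1
    have hMU := hPM.biUnion hP₀.2
    have hUS : M.biUnion id ⊆ S := by
      rw [← hPM.biUnion_eq]
      exact Finset.biUnion_subset_biUnion_of_subset_left id hP₀.2
    rw [Nat.descFactorial_zero, one_mul, ← card_pms (n - t) (S \ M.biUnion id)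
      (by rw [Finset.card_sdiff_of_subset hUS, hMU.card, hS]; omega),
      ← card_filter_subset hUS hMU]
    exact Finset.card_le_card
      (Finset.filter_subset_filter _ (fun P hP => mem_pms.2 (hF P hP)))
  | succ d ih =>
    intro M hM
    rcases (F.filter (fun R => M ⊆ R)).eq_empty_or_nonempty with h0 | ⟨P₀, hP₀⟩
    · simp [h0]
    rw [Finset.mem_filter] at hP₀
    have hnc : ¬ Covers F M := fun h => by have := hmin M h; omega
    simp only [Covers, not_forall, not_exists, not_and] at hnc
    obtain ⟨P, hP, hMP⟩ := hnc
    have hle := card_filter_le_mul hF hI hP hMP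
      (N := (n - M.card - 1).descFactorial d * Nat.doubleFactorial (2 * (n - t) - 1)) (by
        intro f hf
        have hfM : f ∉ M := fun h => hMP f h hf
        have hc := Finset.card_insert_of_notMem hfM
        have := ih (insert f M) (by omega)
        rwa [hc, ← Nat.sub_sub] at this)
    refine hle.trans ((Nat.mul_le_mul_right _
      (card_disjoint_le hS (hF P hP) (hF P₀ hP₀.1) hP₀.2)).trans (le_of_eq ?_))
    obtain ⟨m, hm⟩ : ∃ m, n - M.card = m + 1 := ⟨n - M.card - 1, by omega⟩
    rw [hm, Nat.succ_descFactorial_succ, Nat.add_sub_cancel, mul_assoc]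

/-- The first extension step gains from `card_disjoint_le_two`: the factor is `n - 2` and not
`n - 1`. -/
lemma card_star_le {n t : ℕ} {S : Finset ℕ} (hS : S.card = 2 * n)
    {F : Finset (Finset (Finset ℕ))} (hF : ∀ P ∈ F, IsPM S P)
    (hI : ∀ P ∈ F, ∀ R ∈ F, ∃ b, b ∈ P ∧ b ∈ R) (hmin : ∀ C, Covers F C → t ≤ C.card) (htn : t ≤ n)
    (ht : 2 ≤ t) (e : Finset ℕ) :
    (F.filter (fun R => e ∈ R)).card ≤
      (n - 2) * ((n - 2).descFactorial (t - 2) * Nat.doubleFactorial (2 * (n - t) - 1)) := by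
  rcases (F.filter (fun R => e ∈ R)).eq_empty_or_nonempty with h0 | ⟨P₀, hP₀⟩
  · simp [h0]
  rw [Finset.mem_filter] at hP₀
  obtain ⟨he, heS⟩ := (hF P₀ hP₀.1).1 e hP₀.2
  have hnc : ¬ Covers F {e} := fun h => by
    have := hmin _ h
    rw [Finset.card_singleton] at this
    omega
  simp only [Covers, not_forall, not_exists, not_and] at hnc
  obtain ⟨P, hP, hMP⟩ := hnc
  have hle := card_filter_le_mul hF hI hP hMP
    (N := (n - 2).descFactorial (t - 2) * Nat.doubleFactorial (2 * (n - t) - 1)) (by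
      intro f hf
      have hfM : f ∉ ({e} : Finset (Finset ℕ)) := fun h => hMP f h hf
      have hc := Finset.card_insert_of_notMem hfM
      rw [Finset.card_singleton] at hc
      have := card_filter_le_descFactorial hS hF hI hmin htn (t - 2) (insert f {e}) (by omega)
      rwa [hc] at this)
  simp only [Finset.singleton_subset_iff, Finset.singleton_biUnion, id] at hle
  exact hle.trans (Nat.mul_le_mul_right _
    (card_disjoint_le_two hS (hF P hP) heS he (hMP e (by simp))))

/-! ### Numerical estimates -/

/-- The bound obtained from a minimum cover of size `t < n` stays below `(2n - 3)!!`: it does not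
increase with `t`, and the case `t = 2` is `2(n - 2) < 2n - 3`. -/
lemma bound_lt {n t : ℕ} (ht : 2 ≤ t) (htn : t < n) :
    t * ((n - 2) * ((n - 2).descFactorial (t - 2) * Nat.doubleFactorial (2 * (n - t) - 1))) <
      Nat.doubleFactorial (2 * n - 3) := by
  induction t, ht using Nat.le_induction with
  | base =>
    obtain ⟨m, rfl⟩ : ∃ m, n = m + 3 := ⟨n - 3, by omega⟩
    have e1 : 2 * (m + 3) - 3 = (2 * m + 1) + 2 := by omega
    have e2 : 2 * (m + 3 - 2) - 1 = 2 * m + 1 := by omega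
    have e3 : m + 3 - 2 = m + 1 := by omega
    rw [e1, e2, e3, Nat.doubleFactorial_add_two]
    have := Nat.doubleFactorial_pos (2 * m + 1)
    simp only [Nat.sub_self, Nat.descFactorial_zero, one_mul]
    nlinarith
  | succ t ht ih =>
    refine lt_of_le_of_lt ?_ (ih (by omega))
    obtain ⟨m, rfl⟩ : ∃ m, n = t + (m + 2) := ⟨n - t - 2, by omega⟩
    obtain ⟨s, rfl⟩ : ∃ s, t = s + 2 := ⟨t - 2, by omega⟩
    have e1 : 2 * (s + 2 + (m + 2) - (s + 2 + 1)) - 1 = 2 * m + 1 := by omega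
    have e2 : 2 * (s + 2 + (m + 2) - (s + 2)) - 1 = (2 * m + 1) + 2 := by omega
    have e3 : s + 2 + (m + 2) - 2 = s + m + 2 := by omega
    have e4 : s + 2 + 1 - 2 = s + 1 := by omega
    have e5 : s + m + 2 - s = m + 2 := by omega
    rw [e1, e2, e3, e4, Nat.add_sub_cancel, Nat.descFactorial_succ, e5,
      Nat.doubleFactorial_add_two]
    have hk : (s + 2 + 1) * (m + 2) ≤ (s + 2) * (2 * m + 1 + 2) := by nlinarith
    calc _ = ((s + 2 + 1) * (m + 2)) * ((s + m + 2) * ((s + m + 2).descFactorial s *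
          Nat.doubleFactorial (2 * m + 1))) := by ring
      _ ≤ ((s + 2) * (2 * m + 1 + 2)) * ((s + m + 2) * ((s + m + 2).descFactorial s *
          Nat.doubleFactorial (2 * m + 1))) := Nat.mul_le_mul_right _ hk
      _ = _ := by ring

lemma factorial_bound_lt (m : ℕ) :
    (m + 5) * ((m + 3) * (m + 3).factorial) < Nat.doubleFactorial (2 * m + 7) := by
  induction m with
  | zero => decide
  | succ m ih =>
    have e1 : 2 * (m + 1) + 7 = (2 * m + 7) + 2 := by ring
    rw [e1, Nat.doubleFactorial_add_two, show m + 1 + 3 = (m + 3) + 1 by ring, Nat.factorial_succ]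
    have hk : (m + 1 + 5) * ((m + 3 + 1) * (m + 3 + 1)) ≤ (2 * m + 7 + 2) * ((m + 5) * (m + 3)) := by
      nlinarith [sq_nonneg m]
    calc _ = ((m + 1 + 5) * ((m + 3 + 1) * (m + 3 + 1))) * (m + 3).factorial := by ring
      _ ≤ ((2 * m + 7 + 2) * ((m + 5) * (m + 3))) * (m + 3).factorial := Nat.mul_le_mul_right _ hk
      _ = (2 * m + 7 + 2) * ((m + 5) * ((m + 3) * (m + 3).factorial)) := by ring
      _ < _ := by
        apply Nat.mul_lt_mul_of_pos_left ih (by omega)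

/-- The numerical estimate for a minimum cover of size `n`. The summand `n - 1` is needed
for `n = 3, 4`. -/
lemma bound_lt_top {n : ℕ} (hn : 2 ≤ n) :
    n * ((n - 2) * ((n - 2).descFactorial (n - 2) * Nat.doubleFactorial (2 * (n - n) - 1))) <
      Nat.doubleFactorial (2 * n - 3) + (n - 1) := by
  rw [Nat.descFactorial_self, Nat.sub_self]
  rcases Nat.lt_or_ge n 5 with h | h
  · interval_cases n <;> decide
  · obtain ⟨m, rfl⟩ : ∃ m, n = m + 5 := ⟨n - 5, by omega⟩
    have := factorial_bound_lt m
    have e1 : 2 * (m + 5) - 3 = 2 * m + 7 := by omega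
    have e2 : m + 5 - 2 = m + 3 := by omega
    rw [e1, e2]
    have e3 : Nat.doubleFactorial (2 * 0 - 1) = 1 := rfl
    rw [e3, mul_one]
    omega

/-! ### The Erdős–Ko–Rado theorem for perfect matchings -/

/-- An intersecting family of perfect matchings of `2n` vertices that has `(2n - 3)!!` members is the
star of an edge. -/
lemma ekr_matchings {n : ℕ} (hn : 2 ≤ n) {S : Finset ℕ} (hS : S.card = 2 * n)
    {F : Finset (Finset (Finset ℕ))} (hF : ∀ P ∈ F, IsPM S P)
    (hI : ∀ P ∈ F, ∀ R ∈ F, ∃ b, b ∈ P ∧ b ∈ R)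
    (hcard : F.card = Nat.doubleFactorial (2 * n - 3)) :
    ∃ e ⊆ S, e.card = 2 ∧ F = (pms S).filter (fun P => e ∈ P) := by
  classical
  obtain ⟨P, hP⟩ := Finset.card_pos.1 (hcard ▸ Nat.doubleFactorial_pos _ : 0 < F.card)
  have hPcard : P.card = n := by
    have := (hF P hP).card
    omega
  have hPcov : Covers F P := fun R hR => hI P hP R hR
  have hex : ∃ t, ∃ C, Covers F C ∧ C.card = t := ⟨_, P, hPcov, rfl⟩
  obtain ⟨C, hC, hCt⟩ := Nat.find_spec hex
  have hmin : ∀ C', Covers F C' → C.card ≤ C'.card := fun C' h =>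
    hCt ▸ Nat.find_min' hex ⟨C', h, rfl⟩
  have htn : C.card ≤ n := hPcard ▸ hmin P hPcov
  have hsum : ∀ D : Finset (Finset ℕ), Covers F D → F ⊆ D.biUnion
      (fun e => F.filter (fun R => e ∈ R)) := by
    intro D hD R hR
    obtain ⟨b, hb, hbR⟩ := hD R hR
    exact Finset.mem_biUnion.2 ⟨b, hb, Finset.mem_filter.2 ⟨hR, hbR⟩⟩
  have ht0 : C.card ≠ 0 := by
    intro h0
    obtain ⟨b, hb, -⟩ := hC P hP
    rw [Finset.card_eq_zero.1 h0] at hb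
    simp at hb
  by_cases ht1 : C.card = 1
  · obtain ⟨e, rfl⟩ := Finset.card_eq_one.1 ht1
    have heF : ∀ R ∈ F, e ∈ R := fun R hR => by
      obtain ⟨b, hb, hbR⟩ := hC R hR
      exact Finset.mem_singleton.1 hb ▸ hbR
    obtain ⟨he, heS⟩ := (hF P hP).1 e (heF P hP)
    refine ⟨e, heS, he, Finset.eq_of_subset_of_card_le
      (fun R hR => Finset.mem_filter.2 ⟨mem_pms.2 (hF R hR), heF R hR⟩) (le_of_eq ?_)⟩
    rw [card_star heS he, card_pms (n - 1) _
      (by rw [Finset.card_sdiff_of_subset heS, he, hS]; omega), hcard]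
    congr 1
    omega
  exfalso
  have ht : 2 ≤ C.card := by omega
  have hstar := card_star_le hS hF hI hmin htn ht
  rcases htn.lt_or_eq with hlt | heq
  · have h1 := (Finset.card_le_card (hsum C hC)).trans
      (Finset.card_biUnion_le_card_mul _ _ _ (fun e _ => hstar e))
    have h2 := bound_lt ht hlt
    omega
  · -- Here `P` itself is a minimum cover, and `P` is counted `n` times in the union bound.
    have hb := bound_lt_top hn
    rw [heq] at hstar
    have h1 : (F.erase P).card ≤ ∑ e ∈ P, ((F.erase P).filter (fun R => e ∈ R)).card := by
      refine le_trans (Finset.card_le_card ?_) Finset.card_biUnion_le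
      intro R hR
      obtain ⟨b, hb, hbR⟩ := hPcov R (Finset.mem_of_mem_erase hR)
      exact Finset.mem_biUnion.2 ⟨b, hb, Finset.mem_filter.2 ⟨hR, hbR⟩⟩
    have h2 : ∑ e ∈ P, (((F.erase P).filter (fun R => e ∈ R)).card + 1) ≤
        P.card • ((n - 2) * ((n - 2).descFactorial (n - 2) *
          Nat.doubleFactorial (2 * (n - n) - 1))) := by
      apply Finset.sum_le_card_nsmul
      intro e he
      refine le_trans (le_of_eq ?_) (hstar e)
      have hmem : P ∈ F.filter (fun R => e ∈ R) := Finset.mem_filter.2 ⟨hP, he⟩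
      rw [Finset.filter_erase, Finset.card_erase_add_one hmem]
    rw [Finset.sum_add_distrib, Finset.sum_const, hPcard, smul_eq_mul, smul_eq_mul] at h2
    have h3 := Finset.card_erase_add_one hP
    omega

/-! ### Quasi-perfect matchings as perfect matchings with an extra vertex -/

/-- Adds the vertex `0` to a one-element block and leaves every other block unchanged. -/
def up (b : Finset ℕ) : Finset ℕ := if b.card = 1 then insert 0 b else b

lemma erase_up {b : Finset ℕ} (h : 0 ∉ b) : (up b).erase 0 = b := by
  unfold up
  split_ifs
  · exact Finset.erase_insert h
  · exact Finset.erase_eq_of_notMem h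

lemma up_erase {b : Finset ℕ} (h : b.card = 2) : up (b.erase 0) = b := by
  unfold up
  by_cases h0 : 0 ∈ b
  · rw [if_pos (by rw [Finset.card_erase_of_mem h0, h]), Finset.insert_erase h0]
  · rw [Finset.erase_eq_of_notMem h0, if_neg (by omega)]

lemma mem_up {b : Finset ℕ} {x : ℕ} (hx : x ∈ up b) : x ∈ b ∨ (x = 0 ∧ b.card = 1) := by
  unfold up at hx
  split_ifs at hx with h
  · rcases Finset.mem_insert.1 hx with h' | h'
    · exact Or.inr ⟨h', h⟩
    · exact Or.inl h'
  · exact Or.inl hx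

lemma subset_up (b : Finset ℕ) : b ⊆ up b := by
  unfold up
  split_ifs
  · exact Finset.subset_insert _ _
  · exact subset_rfl

lemma zero_notMem {k : ℕ} {b : Finset ℕ} (h : b ⊆ Finset.Icc 1 (2 * k + 1)) : 0 ∉ b := fun h0 => by
  simpa using h h0

lemma card_up {b : Finset ℕ} (h0 : 0 ∉ b) (h : b.card = 1 ∨ b.card = 2) : (up b).card = 2 := by
  unfold up
  split_ifs with h1
  · rw [Finset.card_insert_of_notMem h0, h1]
  · exact h.resolve_left h1

lemma up_subset {k : ℕ} {b : Finset ℕ} (h : b ⊆ Finset.Icc 1 (2 * k + 1)) :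
    up b ⊆ Finset.range (2 * (k + 1)) := by
  intro x hx
  rw [Finset.mem_range]
  rcases mem_up hx with hx | ⟨rfl, -⟩
  · have := Finset.mem_Icc.1 (h hx)
    omega
  · omega

/-- Joining the singleton block to the new vertex `0` turns a quasi-perfect matching into a perfect
matching of `{0, …, 2k+1}`. -/
lemma IsQPM.isPM {k : ℕ} {Q : Finset (Finset ℕ)} (h : IsQPM k Q) :
    IsPM (Finset.range (2 * (k + 1))) (Q.image up) := by
  obtain ⟨hs, hc, hd, hcard, -, h1⟩ := h
  obtain ⟨s, hsing⟩ := Finset.card_eq_one.1 h1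
  have hs' : ∀ B, B ∈ Q ∧ B.card = 1 ↔ B = s := fun B => by
    rw [← Finset.mem_singleton (a := s), ← hsing, Finset.mem_filter]
  refine ⟨?_, ?_, ?_⟩
  · intro b hb
    obtain ⟨B, hB, rfl⟩ := Finset.mem_image.1 hb
    exact ⟨card_up (zero_notMem (hs B hB)) (hcard B hB), up_subset (hs B hB)⟩
  · intro b hb c hc hne
    obtain ⟨B, hB, rfl⟩ := Finset.mem_image.1 hb
    obtain ⟨C, hC, rfl⟩ := Finset.mem_image.1 hc
    have hBC : B ≠ C := fun h => hne (h ▸ rfl)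
    rw [Finset.disjoint_left]
    intro x hxB hxC
    rcases mem_up hxB with hxB | ⟨hx0, hB1⟩ <;> rcases mem_up hxC with hxC | ⟨hx0', hC1⟩
    · exact Finset.disjoint_left.1 (hd B hB C hC hBC) hxB hxC
    · exact zero_notMem (hs B hB) (hx0' ▸ hxB)
    · exact zero_notMem (hs C hC) (hx0 ▸ hxC)
    · exact hBC (((hs' B).1 ⟨hB, hB1⟩).trans ((hs' C).1 ⟨hC, hC1⟩).symm)
  · intro x hx
    rw [Finset.mem_range] at hx
    rcases Nat.eq_zero_or_pos x with rfl | hpos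
    · obtain ⟨hsQ, hs1⟩ := (hs' s).2 rfl
      exact ⟨up s, Finset.mem_image_of_mem _ hsQ, by simp [up, hs1]⟩
    · obtain ⟨B, hB, hxB⟩ := hc x (Finset.mem_Icc.2 ⟨hpos, by omega⟩)
      exact ⟨up B, Finset.mem_image_of_mem _ hB, subset_up B hxB⟩

/-- Deleting the vertex `0` turns a perfect matching of `{0, …, 2k+1}` into a quasi-perfect
matching. -/
lemma IsPM.isQPM {k : ℕ} {P : Finset (Finset ℕ)} (h : IsPM (Finset.range (2 * (k + 1))) P) :
    IsQPM k (P.image (fun b => b.erase 0)) := by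
  have hinj : Set.InjOn (fun b : Finset ℕ => b.erase 0) (P : Set (Finset ℕ)) := by
    intro b hb c hc hbc
    have := congrArg up hbc
    simpa only [up_erase (h.1 b hb).1, up_erase (h.1 c hc).1] using this
  have hPc : P.card = k + 1 := by
    have := h.card
    rw [Finset.card_range] at this
    omega
  obtain ⟨z, hz, h0z⟩ := h.2.2 0 (by simp)
  have hz2 := (h.1 z hz).1
  have hone : ∀ b ∈ P, (b.erase 0).card = 1 ↔ b = z := by
    intro b hb
    have hb2 := (h.1 b hb).1
    by_cases h0 : 0 ∈ b
    · rw [Finset.card_erase_of_mem h0, hb2]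
      simpa using h.eq_of_mem hb hz h0 h0z
    · rw [Finset.erase_eq_of_notMem h0, hb2]
      simp only [OfNat.ofNat_ne_one, false_iff]
      rintro rfl
      exact h0 h0z
  have hcard : ∀ B ∈ P.image (fun b => b.erase 0), B.card = 1 ∨ B.card = 2 := by
    intro B hB
    obtain ⟨b, hb, rfl⟩ := Finset.mem_image.1 hB
    have hb2 := (h.1 b hb).1
    by_cases h0 : 0 ∈ b
    · left
      rw [Finset.card_erase_of_mem h0, hb2]
    · right
      rw [Finset.erase_eq_of_notMem h0, hb2]
  have h1 : (P.image (fun b => b.erase 0)).filter (fun B => B.card = 1) = {z.erase 0} := by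
    ext B
    rw [Finset.mem_filter, Finset.mem_singleton, Finset.mem_image]
    constructor
    · rintro ⟨⟨b, hb, rfl⟩, hB⟩
      rw [(hone b hb).1 hB]
    · rintro rfl
      exact ⟨⟨z, hz, rfl⟩, (hone z hz).2 rfl⟩
  have h1c : ((P.image (fun b => b.erase 0)).filter (fun B => B.card = 1)).card = 1 := by
    rw [h1, Finset.card_singleton]
  refine ⟨?_, ?_, ?_, hcard, ?_, h1c⟩
  · intro B hB x hx
    obtain ⟨b, hb, rfl⟩ := Finset.mem_image.1 hB
    rw [Finset.mem_erase] at hx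
    have := Finset.mem_range.1 ((h.1 b hb).2 hx.2)
    rw [Finset.mem_Icc]
    omega
  · intro x hx
    rw [Finset.mem_Icc] at hx
    obtain ⟨b, hb, hxb⟩ := h.2.2 x (Finset.mem_range.2 (by omega))
    exact ⟨_, Finset.mem_image_of_mem _ hb, Finset.mem_erase.2 ⟨by omega, hxb⟩⟩
  · intro B hB C hC hne
    obtain ⟨b, hb, rfl⟩ := Finset.mem_image.1 hB
    obtain ⟨c, hc, rfl⟩ := Finset.mem_image.1 hC
    have hbc : b ≠ c := fun h => hne (h ▸ rfl)
    exact Finset.disjoint_of_subset_left (Finset.erase_subset _ _)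
      (Finset.disjoint_of_subset_right (Finset.erase_subset _ _) (h.2.1 b hb c hc hbc))
  · have h4 := Finset.card_filter_add_card_filter_not (s := P.image (fun b => b.erase 0))
      (fun B => B.card = 1)
    rw [Finset.card_image_of_injOn hinj, h1c, hPc] at h4
    have h5 : (P.image (fun b => b.erase 0)).filter (fun B => B.card = 2) =
        (P.image (fun b => b.erase 0)).filter (fun B => ¬ B.card = 1) := by
      apply Finset.filter_congr
      intro B hB
      have := hcard B hB
      omega
    rw [h5]
    omega

lemma image_erase_image_up {k : ℕ} {Q : Finset (Finset ℕ)} (h : IsQPM k Q) :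
    (Q.image up).image (fun b => b.erase 0) = Q := by
  rw [Finset.image_image]
  conv_rhs => rw [← Finset.image_id (s := Q)]
  apply Finset.image_congr
  intro b hb
  exact erase_up (zero_notMem (h.1 b hb))

lemma image_up_image_erase {S : Finset ℕ} {P : Finset (Finset ℕ)} (h : IsPM S P) :
    (P.image (fun b => b.erase 0)).image up = P := by
  rw [Finset.image_image]
  conv_rhs => rw [← Finset.image_id (s := P)]
  apply Finset.image_congr
  intro b hb
  exact up_erase (h.1 b hb).1

lemma up_mem_image {k : ℕ} {Q : Finset (Finset ℕ)} (h : IsQPM k Q) {b : Finset ℕ} (hb : 0 ∉ b) :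
    up b ∈ Q.image up ↔ b ∈ Q := by
  refine ⟨fun hm => ?_, fun hm => Finset.mem_image_of_mem _ hm⟩
  obtain ⟨c, hc, hcb⟩ := Finset.mem_image.1 hm
  have := congrArg (fun b => Finset.erase b 0) hcb
  simp only [erase_up hb, erase_up (zero_notMem (h.1 c hc))] at this
  exact this ▸ hc

theorem stmt_17 (k : ℕ) (hk : 1 ≤ k) :
    (∀ F : Finset (Finset (Finset ℕ)),
      (∀ Q ∈ F, IsQPM k Q) →
      (∀ Q ∈ F, ∀ R ∈ F, ∃ B, B ∈ Q ∧ B ∈ R) →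
      F.card = Nat.doubleFactorial (2 * k - 1) →
      ∃ b : Finset ℕ, b ⊆ Finset.Icc 1 (2 * k + 1) ∧ (b.card = 1 ∨ b.card = 2) ∧
        ∀ Q : Finset (Finset ℕ), Q ∈ F ↔ (IsQPM k Q ∧ b ∈ Q)) ∧
    (∀ F : Finset (Finset (Finset ℕ)), ∀ b : Finset ℕ,
      b ⊆ Finset.Icc 1 (2 * k + 1) → (b.card = 1 ∨ b.card = 2) →
      (∀ Q : Finset (Finset ℕ), Q ∈ F ↔ (IsQPM k Q ∧ b ∈ Q)) →
      (∀ Q ∈ F, ∀ R ∈ F, ∃ B, B ∈ Q ∧ B ∈ R) ∧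
        F.card = Nat.doubleFactorial (2 * k - 1)) := by
  have hS : (Finset.range (2 * (k + 1))).card = 2 * (k + 1) := Finset.card_range _
  constructor
  · intro F hF hI hcard
    have hinj : Set.InjOn (fun Q : Finset (Finset ℕ) => Q.image up) (F : Set _) := by
      intro Q hQ R hR hQR
      have := congrArg (fun P : Finset (Finset ℕ) => P.image (fun b => b.erase 0)) hQR
      simpa only [image_erase_image_up (hF Q hQ), image_erase_image_up (hF R hR)] using this
    obtain ⟨e, heS, he, hFe⟩ := ekr_matchings (n := k + 1) (by omega) hS
      (F := F.image (fun Q => Q.image up))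
      (by
        intro P hP
        obtain ⟨Q, hQ, rfl⟩ := Finset.mem_image.1 hP
        exact (hF Q hQ).isPM)
      (by
        intro P hP R hR
        obtain ⟨Q, hQ, rfl⟩ := Finset.mem_image.1 hP
        obtain ⟨Q', hQ', rfl⟩ := Finset.mem_image.1 hR
        obtain ⟨B, hB, hB'⟩ := hI Q hQ Q' hQ'
        exact ⟨up B, Finset.mem_image_of_mem _ hB, Finset.mem_image_of_mem _ hB'⟩)
      (by
        rw [Finset.card_image_of_injOn hinj, hcard]
        congr 1)
    have hmem : ∀ Q, IsQPM k Q → (e.erase 0 ∈ Q ↔ Q.image up ∈ F.image (fun Q => Q.image up)) := by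
      intro Q hQ
      rw [hFe, Finset.mem_filter, mem_pms, ← up_mem_image hQ (Finset.notMem_erase 0 e), up_erase he]
      exact ⟨fun h => ⟨hQ.isPM, h⟩, fun h => h.2⟩
    refine ⟨e.erase 0, ?_, ?_, ?_⟩
    · intro x hx
      rw [Finset.mem_erase] at hx
      have := Finset.mem_range.1 (heS hx.2)
      rw [Finset.mem_Icc]
      omega
    · by_cases h0 : 0 ∈ e
      · left
        rw [Finset.card_erase_of_mem h0, he]
      · right
        rw [Finset.erase_eq_of_notMem h0, he]
    · intro Q
      constructor
      · intro hQ
        exact ⟨hF Q hQ, (hmem Q (hF Q hQ)).2 (Finset.mem_image_of_mem _ hQ)⟩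
      · rintro ⟨hQ, hb⟩
        obtain ⟨R, hR, hRQ⟩ := Finset.mem_image.1 ((hmem Q hQ).1 hb)
        have := congrArg (fun P : Finset (Finset ℕ) => P.image (fun b => b.erase 0)) hRQ
        simp only [image_erase_image_up hQ, image_erase_image_up (hF R hR)] at this
        exact this ▸ hR
  · intro F b hbS hb hF
    have h0 := zero_notMem hbS
    refine ⟨fun Q hQ R hR => ⟨b, ((hF Q).1 hQ).2, ((hF R).1 hR).2⟩, ?_⟩
    have hstar := card_star (up_subset hbS) (card_up h0 hb)
    rw [card_pms k _ (by
      rw [Finset.card_sdiff_of_subset (up_subset hbS), card_up h0 hb, hS]; omega)] at hstar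
    rw [← hstar]
    refine Finset.card_bij' (fun Q _ => Q.image up) (fun P _ => P.image (fun b => b.erase 0))
      ?_ ?_ ?_ ?_
    · intro Q hQ
      have hQ' := (hF Q).1 hQ
      exact Finset.mem_filter.2 ⟨mem_pms.2 hQ'.1.isPM, Finset.mem_image_of_mem _ hQ'.2⟩
    · intro P hP
      rw [Finset.mem_filter, mem_pms] at hP
      refine (hF _).2 ⟨hP.1.isQPM, ?_⟩
      rw [← erase_up h0]
      exact Finset.mem_image_of_mem (fun b => Finset.erase b 0) hP.2
    · intro Q hQ
      exact image_erase_image_up ((hF Q).1 hQ).1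
    · intro P hP
      rw [Finset.mem_filter, mem_pms] at hP
      exact image_up_image_erase hP.1
end
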